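/- Let X ⊆ P^{n-1} be a hypersurface of degree d cut out by f ∈ ℂ[x_1,…,x_n]_d, with associated square N×N Kalman matrix K_d(f), N = binom(n-1+d,d). Then the reduced singular locus Sing(K(X)) of the Kalman variety is contained in the subvariety of P^{n²-1} cut out by the (N−1)×(N−1) minors of K_d(f). -/

import Mathlib

noncomputable section

/-! ## Zariski topology on complex affine space -/

/-- The Zariski topology on the affine space `ι → ℂ`: the basic open sets are the
complements of hypersurfaces. -/
def zTop (ι : Type*) : TopologicalSpace (ι → ℂ) :=
  TopologicalSpace.generateFrom
    {U | ∃ p : MvPolynomial ι ℂ, U = {x | MvPolynomial.eval x p ≠ 0}}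

/-- Zariski open subset of affine space. -/
def zOpen {ι : Type*} (U : Set (ι → ℂ)) : Prop := @IsOpen _ (zTop ι) U

/-- Zariski closed subset of affine space. -/
def zClosed {ι : Type*} (Z : Set (ι → ℂ)) : Prop := @IsClosed _ (zTop ι) Z

/-- Zariski density. -/
def zDense {ι : Type*} (S : Set (ι → ℂ)) : Prop := @Dense _ (zTop ι) S

/-- Zariski closure. -/
def zClosure {ι : Type*} (S : Set (ι → ℂ)) : Set (ι → ℂ) := @closure _ (zTop ι) S

/-- Irreducibility in the Zariski topology. -/
def zIrred {ι : Type*} (S : Set (ι → ℂ)) : Prop := @IsIrreducible _ (zTop ι) S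

/-- The dimension of a subset of affine space: the topological Krull dimension of the
subspace topology induced by the Zariski topology. -/
def zDim {ι : Type*} (S : Set (ι → ℂ)) : WithBot ℕ∞ :=
  @topologicalKrullDim S (TopologicalSpace.induced Subtype.val (zTop ι))

/-- The common zero set of a family of polynomials. -/
def vanishSet {ι : Type*} (S : Set (MvPolynomial ι ℂ)) : Set (ι → ℂ) :=
  {x | ∀ p ∈ S, MvPolynomial.eval x p = 0}

/-- The ideal of all polynomials vanishing on a subset of affine space. -/
def vanishingIdealOf {ι : Type*} (X : Set (ι → ℂ)) : Ideal (MvPolynomial ι ℂ) where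
  carrier := {p | ∀ x ∈ X, MvPolynomial.eval x p = 0}
  add_mem' := by
    intro a b ha hb x hx
    simp [ha x hx, hb x hx]
  zero_mem' := by
    intro x hx
    simp
  smul_mem' := by
    intro c p hp x hx
    simp [smul_eq_mul, hp x hx]

/-- A subset of `ι → ℂ` is a cone if it is stable under scalar multiplication. -/
def IsCone {ι : Type*} (X : Set (ι → ℂ)) : Prop :=
  ∀ (c : ℂ) (v : ι → ℂ), v ∈ X → c • v ∈ X

/-- The affine-linear subspace cut out by `k` affine-linear equations whose coefficients are
recorded by `a` (the `none` coordinate records the constant term). -/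
def affSlice {ι : Type*} [Fintype ι] {k : ℕ} (a : Fin k × Option ι → ℂ) : Set (ι → ℂ) :=
  {x | ∀ j : Fin k, a (j, none) + ∑ i : ι, a (j, some i) * x i = 0}

/-- `hasConeDegree C k δ` : the projective variety with affine cone `C ⊆ ℂ^ι` and projective
dimension `k` has degree `δ`, expressed by saying that a generic affine-linear slice of `C` of
codimension `k + 1` consists of exactly `δ` points. -/
def hasConeDegree {ι : Type*} [Fintype ι] (C : Set (ι → ℂ)) (k δ : ℕ) : Prop :=
  ∃ U : Set (Fin (k + 1) × Option ι → ℂ), zOpen U ∧ zDense U ∧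
    ∀ a ∈ U, (C ∩ affSlice a).ncard = δ

/-! ## Eigenvectors and the Kalman variety -/

/-- `v` is an eigenvector of the matrix `A`. -/
def IsEigenvector {n : ℕ} (A : Matrix (Fin n) (Fin n) ℂ) (v : Fin n → ℂ) : Prop :=
  v ≠ 0 ∧ ∃ lam : ℂ, A.mulVec v = lam • v

/-- The space of `n × n` complex matrices, presented as an affine space. -/
abbrev MatSpace (n : ℕ) := Fin n × Fin n → ℂ

/-- The matrix corresponding to a point of `MatSpace n`. -/
def toMat {n : ℕ} (A : MatSpace n) : Matrix (Fin n) (Fin n) ℂ :=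
  Matrix.of fun i j => A (i, j)

/-- The affine cone over the Kalman variety `𝒦(X)` of the projective variety whose affine
cone is `X`: all matrices having an eigenvector lying on `X`. -/
def kalmanCone {n : ℕ} (X : Set (Fin n → ℂ)) : Set (MatSpace n) :=
  {A | ∃ v ∈ X, IsEigenvector (toMat A) v}



/-! ## Symmetric powers of matrices and Kalman matrices -/

/-- Index set for the monomials of degree `d` in `n` variables. -/
abbrev MonIdx (n d : ℕ) := Sym (Fin n) d

/-- The exponent vector of the monomial indexed by `σ`. -/
def monExp {n d : ℕ} (σ : MonIdx n d) : Fin n →₀ ℕ :=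
  Multiset.toFinsupp (σ : Multiset (Fin n))

/-- The generic `n × n` matrix, whose entries are the variables of `ℂ[A]`. -/
def genMat (n : ℕ) : Matrix (Fin n) (Fin n) (MvPolynomial (Fin n × Fin n) ℂ) :=
  Matrix.of fun i j => MvPolynomial.X (i, j)

/-- The `d`-th symmetric power `ρ_d(A)` of a square matrix `A`, i.e. the matrix (in the basis of
monomials of degree `d`) of the induced action of `A` on forms of degree `d`: the entry at
`(τ, σ)` is the coefficient of `x^σ` in `(A·x)^τ`. -/
def symPow {R : Type*} [CommRing R] {n : ℕ} (d : ℕ) (A : Matrix (Fin n) (Fin n) R) :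
    Matrix (MonIdx n d) (MonIdx n d) R :=
  Matrix.of fun τ σ =>
    MvPolynomial.coeff (monExp σ)
      (∏ j : Fin n, (∑ k : Fin n, MvPolynomial.C (A j k) * MvPolynomial.X k) ^ (monExp τ j))

/-- The coefficient vector of a form of degree `d`. -/
def coeffVec {n : ℕ} (d : ℕ) (f : MvPolynomial (Fin n) ℂ) : MonIdx n d → ℂ :=
  fun σ => MvPolynomial.coeff (monExp σ) f

/-- The form of degree `d` with coefficient vector `c`. -/
def polyOf {n d : ℕ} (c : MonIdx n d → ℂ) : MvPolynomial (Fin n) ℂ :=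
  ∑ σ : MonIdx n d, MvPolynomial.monomial (monExp σ) (c σ)

/-- The rectangular Kalman matrix of order `d` associated with a `p × N` coefficient matrix `C`:
its rows are the rows of `C`, `C·ρ_d(A)`, ..., `C·ρ_d(A)^{t-1}` for the generic matrix `A`. -/
def kalmanMat {n d p : ℕ} (t : ℕ) (C : Matrix (Fin p) (MonIdx n d) ℂ) :
    Matrix (Fin t × Fin p) (MonIdx n d) (MvPolynomial (Fin n × Fin n) ℂ) :=
  Matrix.of fun r τ =>
    ∑ κ : MonIdx n d, MvPolynomial.C (C r.2 κ) * ((symPow d (genMat n)) ^ (r.1 : ℕ)) κ τ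

/-- The square Kalman matrix `K_d(f)` of a form `f` with coefficient vector `c`: the rows are
`C_f ρ_d(A)^i` for `i = 0, …, N - 1` (indexed by monomials through a fixed enumeration). -/
def kalmanSq {n : ℕ} (d : ℕ) (c : MonIdx n d → ℂ) :
    Matrix (MonIdx n d) (MonIdx n d) (MvPolynomial (Fin n × Fin n) ℂ) :=
  Matrix.of fun σ τ =>
    ∑ κ : MonIdx n d, MvPolynomial.C (c κ) *
      ((symPow d (genMat n)) ^ ((Fintype.equivFin (MonIdx n d)) σ : ℕ)) κ τ

/-- The determinant of the square Kalman matrix of order `d`. -/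
def kalmanDet {n : ℕ} (d : ℕ) (c : MonIdx n d → ℂ) : MvPolynomial (Fin n × Fin n) ℂ :=
  (kalmanSq d c).det

/-- The locus of matrices at which all maximal minors of a (rectangular) matrix of polynomials
in `ℂ[A]` vanish. -/
def maxMinorsZeroSet {n d : ℕ} {ridx : Type*}
    (M : Matrix ridx (MonIdx n d) (MvPolynomial (Fin n × Fin n) ℂ)) : Set (MatSpace n) :=
  {A | ∀ e : MonIdx n d → ridx, Function.Injective e →
    MvPolynomial.eval A (Matrix.det (Matrix.of fun σ τ => M (e σ) τ)) = 0}



/-! ## Polarizations and μ-Kalman varieties -/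

/-- Evaluation of the multihomogeneous polarization `f_μ` of `f` at a tuple of vectors
`v_1, …, v_s` (up to a nonzero rational normalization constant): the coefficient of `t^μ`
in `f(t_1 v_1 + ⋯ + t_s v_s)`. -/
def polarEval {n s : ℕ} (f : MvPolynomial (Fin n) ℂ) (μ : Fin s → ℕ)
    (v : Fin s → Fin n → ℂ) : ℂ :=
  MvPolynomial.coeff (Finsupp.equivFunOnFinite.symm μ)
    (MvPolynomial.eval₂ MvPolynomial.C
      (fun k => ∑ i : Fin s, MvPolynomial.C (v i k) * MvPolynomial.X i) f)

/-- The affine cone over the `μ`-Kalman variety `𝒦_μ(f)`: the Zariski closure of the set of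
matrices admitting linearly independent eigenvectors `v_1, …, v_s` with `f_μ(v_1, …, v_s) = 0`. -/
def muKalmanCone {n : ℕ} (f : MvPolynomial (Fin n) ℂ) {s : ℕ} (μ : Fin s → ℕ) :
    Set (MatSpace n) :=
  zClosure {A | ∃ v : Fin s → (Fin n → ℂ),
    (∀ i, IsEigenvector (toMat A) (v i)) ∧ LinearIndependent ℂ v ∧ polarEval f μ v = 0}

/-- The parts of a partition of `d`, listed as a tuple. -/
def partTuple (d : ℕ) (μ : Nat.Partition d) : Fin (Multiset.card μ.parts) → ℕ :=
  fun i => μ.parts.toList.get (i.cast (Multiset.length_toList _).symm)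

/-- The multiset of nonzero exponents of the monomial indexed by `σ`. -/
def expMultiset {n d : ℕ} (σ : Sym (Fin n) d) : Multiset ℕ :=
  Multiset.filter (fun e => e ≠ 0)
    (Multiset.map (fun i => Multiset.toFinsupp (σ : Multiset (Fin n)) i) Finset.univ.val)

/-! ## Tangent spaces, smooth points and singular loci -/

/-- The Zariski tangent space of `X ⊆ ℂ^ι` at `x`: the common kernel of the differentials at
`x` of all polynomials vanishing on `X`. -/
def tangentSpace {ι : Type*} [Fintype ι] (X : Set (ι → ℂ)) (x : ι → ℂ) :
    Submodule ℂ (ι → ℂ) where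
  carrier := {u | ∀ p : MvPolynomial ι ℂ, (∀ y ∈ X, MvPolynomial.eval y p = 0) →
      ∑ i : ι, u i * MvPolynomial.eval x (MvPolynomial.pderiv i p) = 0}
  add_mem' := by
    intro a b ha hb p hp
    have h1 := ha p hp
    have h2 := hb p hp
    simp only [Pi.add_apply, add_mul, Finset.sum_add_distrib, h1, h2, add_zero]
  zero_mem' := by
    intro p hp
    simp
  smul_mem' := by
    intro c u hu p hp
    have h1 := hu p hp
    simp only [Pi.smul_apply, smul_eq_mul, mul_assoc, ← Finset.mul_sum, h1, mul_zero]

/-- The local dimension of `X` at `x`, in the Zariski topology. -/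
def zLocalDim {ι : Type*} (X : Set (ι → ℂ)) (x : ι → ℂ) : WithBot ℕ∞ :=
  ⨅ (U : Set (ι → ℂ)) (_ : zOpen U) (_ : x ∈ U), zDim (X ∩ U)

/-- `x` is a smooth point of `X`: the Zariski tangent space has dimension equal to the local
dimension of `X` at `x`. -/
def smoothAt {ι : Type*} [Fintype ι] (X : Set (ι → ℂ)) (x : ι → ℂ) : Prop :=
  ((Module.finrank ℂ (tangentSpace X x) : ℕ∞) : WithBot ℕ∞) = zLocalDim X x

/-- The affine cone over the singular locus of the projective variety whose affine cone is `X`: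
the nonzero points of `X` that are not smooth points. -/
def projSingCone {ι : Type*} [Fintype ι] (X : Set (ι → ℂ)) : Set (ι → ℂ) :=
  {x | x ∈ X ∧ x ≠ 0 ∧ ¬ smoothAt X x}

/-- The affine cone over the (reduced) singular locus of the Kalman variety of the projective
variety with affine cone `X`. -/
def singKalmanCone {n : ℕ} (X : Set (Fin n → ℂ)) : Set (MatSpace n) :=
  zClosure (projSingCone (zClosure (kalmanCone X)))



/-! ## The spaces `ℙ_s = ℙ^{n²-1} × (ℙ^{n-1})^s` (as multicones) -/

/-- Coordinates for the multicone over `ℙ^{n²-1} × (ℙ^{n-1})^{×s}`. -/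
abbrev MIdx (n s : ℕ) := (Fin n × Fin n) ⊕ (Fin s × Fin n)

/-- The matrix component of a point of the multicone. -/
def matPart {n s : ℕ} (x : MIdx n s → ℂ) : MatSpace n := fun ij => x (Sum.inl ij)

/-- The `i`-th vector component of a point of the multicone. -/
def vecPart {n s : ℕ} (x : MIdx n s → ℂ) (i : Fin s) : Fin n → ℂ := fun k => x (Sum.inr (i, k))

/-- A partition of `{1, …, s}` into `k` (indexed) nonempty pairwise disjoint blocks. -/
structure IdxPartition (s k : ℕ) where
  block : Fin k → Finset (Fin s)
  nonempty : ∀ i, (block i).Nonempty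
  disj : ∀ i j, i ≠ j → Disjoint (block i) (block j)
  cover : ∀ p : Fin s, ∃ i, p ∈ block i

/-- The minimal representative of the `i`-th block. -/
def IdxPartition.rep {s k : ℕ} (P : IdxPartition s k) (i : Fin k) : Fin s :=
  (P.block i).min' (P.nonempty i)

/-- The finest partition, all of whose blocks are singletons. -/
def singletonPartition (s : ℕ) : IdxPartition s s where
  block i := {i}
  nonempty i := ⟨i, by simp⟩
  disj i j h := Finset.disjoint_singleton.2 h
  cover p := ⟨p, by simp⟩

/-- A tuple of nonzero vectors is `P`-compatible: vectors within each block of `P` are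
proportional, and representatives of the distinct blocks are linearly independent. -/
def PCompatible {n s k : ℕ} (P : IdxPartition s k) (v : Fin s → Fin n → ℂ) : Prop :=
  (∀ p, v p ≠ 0) ∧
  (∀ i, ∀ p ∈ P.block i, ∀ q ∈ P.block i, ∃ c : ℂ, v p = c • v q) ∧
  (∀ r : Fin k → Fin s, (∀ i, r i ∈ P.block i) → LinearIndependent ℂ (fun i => v (r i)))

/-- The multicone over `W_s`: tuples `(A, v_1, …, v_s)` where each `v_i` is an eigenvector of
the (nonzero) matrix `A`. -/
def Wcone (n s : ℕ) : Set (MIdx n s → ℂ) :=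
  {x | matPart x ≠ 0 ∧ ∀ i, IsEigenvector (toMat (matPart x)) (vecPart x i)}

/-- The multicone over `W_{s,P}`: the Zariski closure of the set of tuples in `W_s` whose
vector part is `P`-compatible. -/
def WsPcone (n : ℕ) {s k : ℕ} (P : IdxPartition s k) : Set (MIdx n s → ℂ) :=
  zClosure {x | x ∈ Wcone n s ∧ PCompatible P (fun i => vecPart x i)}

/-! ## Multidegrees -/

/-- Parameter space for a multiprojective slice of multidegree type `γ`. -/
abbrev MSliceParam (n s : ℕ) (γ : Fin (s + 1) → ℕ) : Type :=
  (Fin (n ^ 2 - γ 0) × Option (Fin n × Fin n)) ⊕ ((Σ j : Fin s, Fin (n - γ j.succ)) × Option (Fin n))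

/-- The multiprojective affine-linear slice with parameters `a`: it cuts the matrix factor by
`n² - γ 0` affine-linear equations and the `j`-th vector factor by `n - γ (j+1)` affine-linear
equations. -/
def mSlice {n s : ℕ} (γ : Fin (s + 1) → ℕ) (a : MSliceParam n s γ → ℂ) :
    Set (MIdx n s → ℂ) :=
  {x | (∀ r : Fin (n ^ 2 - γ 0),
          a (Sum.inl (r, none)) +
            ∑ ij : Fin n × Fin n, a (Sum.inl (r, some ij)) * x (Sum.inl ij) = 0) ∧
       (∀ j : Fin s, ∀ r : Fin (n - γ j.succ),
          a (Sum.inr (⟨j, r⟩, none)) +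
            ∑ k : Fin n, a (Sum.inr (⟨j, r⟩, some k)) * x (Sum.inr (j, k)) = 0)}

/-- `hasMD W γ δ` : the coefficient of the monomial `h_0^{γ 0} h_1^{γ 1} ⋯ h_s^{γ s}` in the
Chow class of the multiprojective variety with multicone `W ⊆ ℂ^{n²} × (ℂ^n)^s` equals `δ`:
a generic multiprojective slice of type `γ` meets `W` in exactly `δ` points. -/
def hasMD {n s : ℕ} (W : Set (MIdx n s → ℂ)) (γ : Fin (s + 1) → ℕ) (δ : ℕ) : Prop :=
  ∃ U : Set (MSliceParam n s γ → ℂ), zOpen U ∧ zDense U ∧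
    ∀ a ∈ U, (W ∩ mSlice γ a).ncard = δ

/-- The exponent vector of the monomial `h_0 · h_1^{n-1} ⋯ h_i^{n-2} ⋯ h_s^{n-1}`. -/
def specialExp (n s : ℕ) (i : Fin s) : Fin (s + 1) → ℕ :=
  fun j => if j = 0 then 1 else if j = i.succ then n - 2 else n - 1

/-- `γ` lies in the box of admissible exponents of the Chow ring of `ℙ^{n²-1} × (ℙ^{n-1})^s`. -/
def inBox (n s : ℕ) (γ : Fin (s + 1) → ℕ) : Prop :=
  γ 0 < n ^ 2 ∧ ∀ j : Fin s, γ j.succ < n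

/-- `representsClass W c q` : the polynomial `q` represents the Chow class of the
multiprojective variety with multicone `W`, of codimension `c`: its coefficients in the
admissible box in degree `c` are the multidegrees of `W`, and all other coefficients vanish. -/
def representsClass {n s : ℕ} (W : Set (MIdx n s → ℂ)) (c : ℕ)
    (q : MvPolynomial (Fin (s + 1)) ℤ) : Prop :=
  (∀ γ : Fin (s + 1) → ℕ, inBox n s γ → (∑ j, γ j) = c →
      ∃ δ : ℕ, q.coeff (Finsupp.equivFunOnFinite.symm γ) = (δ : ℤ) ∧ hasMD W γ δ) ∧
  (∀ γ : Fin (s + 1) → ℕ, ¬ (inBox n s γ ∧ (∑ j, γ j) = c) →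
      q.coeff (Finsupp.equivFunOnFinite.symm γ) = 0)

/-! ## The Chow ring of `ℙ^{n²-1} × (ℙ^{n-1})^s` -/

/-- The defining ideal of the Chow ring `ℤ[h_0, …, h_s]/(h_0^{n²}, h_1^n, …, h_s^n)`. -/
def chowIdeal (n s : ℕ) : Ideal (MvPolynomial (Fin (s + 1)) ℤ) :=
  Ideal.span ({MvPolynomial.X 0 ^ n ^ 2} ∪
    Set.range fun j : Fin s => MvPolynomial.X j.succ ^ n)

/-- The Chow ring `A^*(ℙ_s) = ℤ[h_0, …, h_s]/(h_0^{n²}, h_1^n, …, h_s^n)`. -/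
abbrev ChowRing (n s : ℕ) := MvPolynomial (Fin (s + 1)) ℤ ⧸ chowIdeal n s

/-- The variable substitution `h_0 ↦ t_0`, `h_i ↦ t_{q_i}` underlying `φ_P`. -/
def blockVarMap {s k : ℕ} (P : IdxPartition s k) : Fin (k + 1) → Fin (s + 1) :=
  Fin.cases 0 fun i => (P.rep i).succ

lemma phiP_aux {n s k : ℕ} (P : IdxPartition s k) :
    ∀ a ∈ chowIdeal n k,
      ((Ideal.Quotient.mk (chowIdeal n s)).comp
        (MvPolynomial.rename (R := ℤ) (blockVarMap P)).toRingHom) a = 0 := by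
  intro a ha
  rw [RingHom.comp_apply, Ideal.Quotient.eq_zero_iff_mem]
  have hmap : (MvPolynomial.rename (R := ℤ) (blockVarMap P)).toRingHom a ∈
      Ideal.map (MvPolynomial.rename (R := ℤ) (blockVarMap P)).toRingHom
        (chowIdeal n k) :=
    Ideal.mem_map_of_mem _ ha
  have hle : Ideal.map
      (MvPolynomial.rename (R := ℤ) (blockVarMap P)).toRingHom
      (chowIdeal n k) ≤ chowIdeal n s := by
    rw [chowIdeal, Ideal.map_span, Ideal.span_le]
    rintro q ⟨p, hp, rfl⟩
    rcases hp with hp | ⟨j, rfl⟩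
    · rw [Set.mem_singleton_iff] at hp
      subst hp
      simp only [AlgHom.toRingHom_eq_coe, RingHom.coe_coe, map_pow, MvPolynomial.rename_X,
        Fin.cases_zero]
      exact Ideal.subset_span (Or.inl rfl)
    · simp only [AlgHom.toRingHom_eq_coe, RingHom.coe_coe, map_pow, MvPolynomial.rename_X,
        Fin.cases_succ]
      exact Ideal.subset_span (Or.inr ⟨P.rep j, rfl⟩)
  exact hle hmap

/-- The ring map `φ_P : A^*(ℙ_k) → A^*(ℙ_s)` sending `h_0 ↦ t_0` and `h_i ↦ t_{q_i}`. -/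
def phiP (n : ℕ) {s k : ℕ} (P : IdxPartition s k) : ChowRing n k →+* ChowRing n s :=
  Ideal.Quotient.lift (chowIdeal n k)
    ((Ideal.Quotient.mk (chowIdeal n s)).comp
      (MvPolynomial.rename (R := ℤ) (blockVarMap P)).toRingHom)
    (phiP_aux P)



/-! ## Discriminants of characteristic polynomials -/

/-- `∏_{i<j} (l i - l j)^2` for a list `l`. -/
def listPairProdSq (l : List ℂ) : ℂ :=
  ∏ p ∈ Finset.univ.filter (fun p : Fin l.length × Fin l.length => p.1 < p.2),
    (l.get p.1 - l.get p.2) ^ 2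

/-- The product of the squared differences of all pairs of elements of a multiset; applied to
the multiset of roots of a characteristic polynomial this is the discriminant. -/
def pairProdSq (m : Multiset ℂ) : ℂ := listPairProdSq m.toList

/-- The coordinate vector (for the action of the symmetric power `ρ_d`) of the symmetric
product `v_1 ⋯ v_d` of the vectors `v i`: its `σ`-th coordinate is the coefficient of
`t_1 ⋯ t_d` in `∏_k (∑_i t_i v i k)^{σ_k}`. -/
def symProdVec {n d : ℕ} (v : Fin d → Fin n → ℂ) : MonIdx n d → ℂ := fun σ =>
  MvPolynomial.coeff (Finsupp.equivFunOnFinite.symm fun _ : Fin d => 1)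
    (∏ k : Fin n, (∑ i : Fin d, MvPolynomial.C (v i k) * MvPolynomial.X i) ^ (monExp σ k))

/-!
Let `A` lie in the closure of `𝒦(X)` and have some nonzero `(N-1) × (N-1)` minor.  The closure is
smooth at `A` as soon as there are polynomials `p`, `D` on matrix space with `p = 0` on `𝒦(X)`,
`{p = 0, D ≠ 0} ⊆ 𝒦(X)`, `D(A) ≠ 0` and `dp_A ≠ 0`.

The kernel of the Kalman matrix at `A` contains the Veronese vector of every eigenvector on `X`.
Being at most one-dimensional, it excludes a second eigenvector on `X`, for `d ≥ 2` also a
two-dimensional eigenspace, and, by differentiating the Veronese map, it excludes tangency: at an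
eigenvector `v ∈ X`, the differential `df_v` does not vanish, not even on a second eigenvector or
on a generalized eigenvector above `v`.

For `d ≥ 2` fix a vector `u`.  At an eigenvalue `x` of `A` the vector `adj(x - A) u` is an
eigenvector or zero.  Take `p(A) = det g(A)` with `g(x) = f(adj(x - A) u)`, which vanishes if and
only if `g` has a zero among the eigenvalues of `A`; take for `D` the same expression with a linear
form in place of `f`, so that `D ≠ 0` forces these vectors to be nonzero.  To see that `dp_A ≠ 0`,
perturb `A` to `A + εB` and compare the first-order velocities of the eigenvalue and of
the root of `g`; for a multiple eigenvalue `B` is a matrix unit, for a simple one a commutator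
`PA - AP`.

For a linear form `l`, take for `p` the determinant of the matrix with rows `l, lA, …, lA^{n-1}`,
and `D = 1`.
-/

/-! ## Zariski topology and dimension -/

section Zariski

open MvPolynomial TopologicalSpace

variable {ι : Type*}

local instance : TopologicalSpace (ι → ℂ) := zTop ι

lemma isTopologicalBasis_zTop :
    IsTopologicalBasis {U : Set (ι → ℂ) | ∃ p : MvPolynomial ι ℂ, U = {x | eval x p ≠ 0}} := by
  refine ⟨?_, Set.eq_univ_of_forall fun x => ⟨_, ⟨1, rfl⟩, by simp⟩, rfl⟩
  rintro _ ⟨p, rfl⟩ _ ⟨q, rfl⟩ x hx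
  exact ⟨_, ⟨p * q, rfl⟩, by simpa using hx, fun y hy => by simpa using hy⟩

lemma zOpen_setOf_eval_ne_zero (p : MvPolynomial ι ℂ) : zOpen {x | eval x p ≠ 0} :=
  isTopologicalBasis_zTop.isOpen ⟨p, rfl⟩

lemma zOpen.exists_eval_ne_zero {U : Set (ι → ℂ)} (hU : zOpen U) {x : ι → ℂ} (hx : x ∈ U) :
    ∃ h : MvPolynomial ι ℂ, eval x h ≠ 0 ∧ {y | eval y h ≠ 0} ⊆ U := by
  obtain ⟨_, ⟨h, rfl⟩, hxh, hU⟩ := isTopologicalBasis_zTop.exists_subset_of_mem_open hx hU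
  exact ⟨h, hxh, hU⟩

lemma zClosed_vanishSet (S : Set (MvPolynomial ι ℂ)) : zClosed (vanishSet S) := by
  have : vanishSet S = ⋂ p ∈ S, {x : ι → ℂ | eval x p ≠ 0}ᶜ := by
    ext x
    simp [vanishSet]
  rw [this]
  exact isClosed_biInter fun p _ => (zOpen_setOf_eval_ne_zero p).isClosed_compl

lemma zClosure_eq_vanishSet (S : Set (ι → ℂ)) :
    zClosure S = vanishSet (vanishingIdealOf S : Set (MvPolynomial ι ℂ)) := by
  refine Set.Subset.antisymm
    (closure_minimal (fun x hx p hp => hp x hx) (zClosed_vanishSet _)) fun x hx => ?_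
  by_contra hxS
  obtain ⟨q, hqx, hqS⟩ := zOpen.exists_eval_ne_zero isClosed_closure.isOpen_compl hxS
  refine hqx (hx q fun y hy => ?_)
  by_contra hqy
  exact hqS hqy (subset_closure hy)

lemma vanishingIdealOf_anti {S T : Set (ι → ℂ)} (h : S ⊆ T) :
    vanishingIdealOf T ≤ vanishingIdealOf S :=
  fun _ hp x hx => hp x (h hx)

lemma vanishingIdealOf_zClosure (S : Set (ι → ℂ)) :
    vanishingIdealOf (zClosure S) = vanishingIdealOf S := by
  refine le_antisymm (vanishingIdealOf_anti subset_closure) fun p hp x hx => ?_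
  rw [zClosure_eq_vanishSet] at hx
  exact hx p hp

lemma zIrred_iff_isPrime_vanishingIdealOf {S : Set (ι → ℂ)} :
    zIrred S ↔ (vanishingIdealOf S).IsPrime := by
  have exists_of_notMem {p : MvPolynomial ι ℂ} (hp : p ∉ vanishingIdealOf S) :
      (S ∩ {x | eval x p ≠ 0}).Nonempty := by
    by_contra h
    exact hp fun x hx => not_not.1 fun hpx => h ⟨x, hx, hpx⟩
  constructor
  · rintro ⟨⟨x, hx⟩, hS⟩
    refine ⟨fun h => one_ne_zero (α := ℂ) ?_, fun {p q} hpq => ?_⟩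
    · simpa using (Ideal.eq_top_iff_one _).1 h x hx
    · by_contra! h
      obtain ⟨z, hz, hpz, hqz⟩ := hS _ _ (zOpen_setOf_eval_ne_zero p) (zOpen_setOf_eval_ne_zero q)
        (exists_of_notMem h.1) (exists_of_notMem h.2)
      exact mul_ne_zero hpz hqz (by simpa using hpq z hz)
  · intro hS
    refine ⟨?_, ?_⟩
    · obtain ⟨x, hx, -⟩ := exists_of_notMem ((Ideal.ne_top_iff_one _).1 hS.ne_top)
      exact ⟨x, hx⟩
    · rintro U V hU hV ⟨x, hxS, hxU⟩ ⟨y, hyS, hyV⟩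
      obtain ⟨p, hpx, hpU⟩ := zOpen.exists_eval_ne_zero hU hxU
      obtain ⟨q, hqy, hqV⟩ := zOpen.exists_eval_ne_zero hV hyV
      have hpq : p * q ∉ vanishingIdealOf S :=
        hS.mul_notMem (fun h => hpx (h x hxS)) (fun h => hqy (h y hyS))
      obtain ⟨z, hzS, hz⟩ := exists_of_notMem hpq
      rw [Set.mem_ofPred_eq, map_mul, mul_ne_zero_iff] at hz
      exact ⟨z, hzS, hpU hz.1, hqV hz.2⟩

lemma vanishingIdealOf_vanishSet_inter [Finite ι] (P : Ideal (MvPolynomial ι ℂ)) [P.IsPrime]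
    {U : Set (ι → ℂ)} (hU : zOpen U) (hPU : (vanishSet (P : Set (MvPolynomial ι ℂ)) ∩ U).Nonempty) :
    vanishingIdealOf (vanishSet (P : Set (MvPolynomial ι ℂ)) ∩ U) = P := by
  refine le_antisymm (fun q hq => ?_) fun q hq x hx => hx.1 q hq
  obtain ⟨a, haP, haU⟩ := hPU
  obtain ⟨h, hah, hhU⟩ := zOpen.exists_eval_ne_zero hU haU
  have hqh : q * h ∈ P := by
    rw [← MvPolynomial.IsPrime.vanishingIdeal_zeroLocus (K := ℂ) P, mem_vanishingIdeal_iff]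
    intro x hx
    rw [aeval_eq_eval, map_mul, mul_eq_zero, or_iff_not_imp_right]
    exact fun hxh => hq x ⟨fun p hp => by simpa [aeval_eq_eval] using hx p hp, hhU hxh⟩
  exact (Ideal.IsPrime.mem_or_mem inferInstance hqh).resolve_right fun hhP => hah (haP h hhP)

lemma le_of_vanishingIdealOf_le {T : Set (ι → ℂ)} {Z Z' : IrreducibleCloseds T}
    (h : vanishingIdealOf (Subtype.val '' (Z : Set T)) ≤
      vanishingIdealOf (Subtype.val '' (Z' : Set T))) : Z' ≤ Z := by
  obtain ⟨C, hC, hCZ⟩ := isClosed_induced_iff.1 Z.isClosed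
  intro x hx
  by_contra hxZ
  obtain ⟨q, hqx, hqC⟩ := zOpen.exists_eval_ne_zero hC.isOpen_compl (x := x.1)
    fun hxC => hxZ (by rwa [← SetLike.mem_coe, ← hCZ])
  refine hqx (h (x := q) ?_ _ ⟨x, hx, rfl⟩)
  rintro _ ⟨y, hy, rfl⟩
  by_contra hqy
  rw [← hCZ] at hy
  exact hqC hqy hy

lemma zDim_le_ringKrullDim (T : Set (ι → ℂ)) :
    zDim T ≤ ringKrullDim (MvPolynomial ι ℂ ⧸ vanishingIdealOf T) := by
  have isPrime (Z : IrreducibleCloseds T) :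
      (vanishingIdealOf (Subtype.val '' (Z : Set T))).IsPrime :=
    zIrred_iff_isPrime_vanishingIdealOf.1 <|
      Z.isIrreducible.image _ continuous_subtype_val.continuousOn
  rw [ringKrullDim_quotient, ← Order.krullDim_orderDual]
  refine Order.krullDim_le_of_strictMono
    (fun Z : IrreducibleCloseds T => OrderDual.toDual
      ⟨⟨_, isPrime Z⟩, vanishingIdealOf_anti (Subtype.coe_image_subset T Z)⟩) fun Z Z' hlt => ?_
  exact ⟨vanishingIdealOf_anti (Set.image_mono hlt.le),
    fun h => hlt.not_ge (le_of_vanishingIdealOf_le h)⟩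

lemma isIrreducible_of_image {X Y : Type*} [TopologicalSpace X] [TopologicalSpace Y] {f : X → Y}
    (hf : Topology.IsInducing f) {s : Set X} (hs : IsIrreducible (f '' s)) : IsIrreducible s := by
  refine ⟨Set.image_nonempty.1 hs.1, ?_⟩
  rintro U V hU hV ⟨x, hxs, hxU⟩ ⟨y, hys, hyV⟩
  obtain ⟨U', hU', rfl⟩ := hf.isOpen_iff.1 hU
  obtain ⟨V', hV', rfl⟩ := hf.isOpen_iff.1 hV
  obtain ⟨_, ⟨z, hzs, rfl⟩, hzU, hzV⟩ :=
    hs.2 U' V' hU' hV' ⟨f x, ⟨x, hxs, rfl⟩, hxU⟩ ⟨f y, ⟨y, hys, rfl⟩, hyV⟩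
  exact ⟨z, hzs, hzU, hzV⟩

lemma krullDim_le_zDim {S : Set (ι → ℂ)} (Q : Set (PrimeSpectrum (MvPolynomial ι ℂ)))
    (hQ : ∀ P ∈ Q, vanishingIdealOf (vanishSet (P.asIdeal : Set (MvPolynomial ι ℂ)) ∩ S) =
      P.asIdeal) :
    Order.krullDim Q ≤ zDim S := by
  let V (P : Qᵒᵈ) : Set S :=
    Subtype.val ⁻¹' vanishSet ((OrderDual.ofDual P).1.asIdeal : Set (MvPolynomial ι ℂ))
  have vanishingIdealOf_V (P : Qᵒᵈ) :
      vanishingIdealOf (Subtype.val '' V P) = (OrderDual.ofDual P).1.asIdeal := by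
    rw [Subtype.image_preimage_coe, Set.inter_comm, hQ _ (OrderDual.ofDual P).2]
  have isIrreducible_V (P : Qᵒᵈ) : IsIrreducible (V P) :=
    isIrreducible_of_image Topology.IsInducing.subtypeVal <| zIrred_iff_isPrime_vanishingIdealOf.2
      (vanishingIdealOf_V P ▸ (OrderDual.ofDual P).1.isPrime)
  rw [← Order.krullDim_orderDual]
  refine Order.krullDim_le_of_strictMono (fun P => (⟨V P, isIrreducible_V P,
    (zClosed_vanishSet _).preimage continuous_subtype_val⟩ : IrreducibleCloseds S))
    fun P P' hlt => ⟨fun x hx q hq => hx q (hlt.le hq), fun hle => hlt.not_ge ?_⟩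
  have h : vanishingIdealOf (Subtype.val '' V P) ≤ vanishingIdealOf (Subtype.val '' V P') :=
    vanishingIdealOf_anti (Set.image_mono hle)
  rwa [vanishingIdealOf_V, vanishingIdealOf_V] at h

lemma ringKrullDim_mvPolynomial_complex [Finite ι] :
    ringKrullDim (MvPolynomial ι ℂ) = Nat.card ι := by
  rw [MvPolynomial.ringKrullDim_of_isNoetherianRing, ringKrullDim_eq_zero_of_field, zero_add]

/-- The maximal ideal of a point `x` of affine space. -/
def pointIdeal (x : ι → ℂ) : Ideal (MvPolynomial ι ℂ) := RingHom.ker (eval x)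

instance (x : ι → ℂ) : (pointIdeal x).IsPrime := RingHom.ker_isPrime _

lemma height_pointIdeal_le (x y : ι → ℂ) : (pointIdeal x).height ≤ (pointIdeal y).height := by
  let translate (c : ι → ℂ) : MvPolynomial ι ℂ →ₐ[ℂ] MvPolynomial ι ℂ :=
    aeval fun i => X i + C (c i)
  have translate_comp (c) : (translate c).comp (translate (-c)) = AlgHom.id ℂ _ := by
    ext i
    simp [translate, algebraMap_eq]
  let e : MvPolynomial ι ℂ ≃ₐ[ℂ] MvPolynomial ι ℂ :=
    AlgEquiv.ofAlgHom (translate (x - y)) (translate (-(x - y))) (translate_comp _)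
      (by simpa using translate_comp (-(x - y)))
  have eval_e (p : MvPolynomial ι ℂ) : eval y (e p) = eval x p := by
    have : (aeval y : MvPolynomial ι ℂ →ₐ[ℂ] ℂ).comp (translate (x - y)) = aeval x := by
      ext i
      simp [translate]
    simpa [aeval_eq_eval, e] using DFunLike.congr_fun this p
  have : pointIdeal x = (pointIdeal y).comap e.toRingEquiv := by
    ext p
    simp [pointIdeal, RingHom.mem_ker, eval_e]
  rw [this, RingEquiv.height_comap]

lemma height_pointIdeal [Finite ι] (x : ι → ℂ) : (pointIdeal x).height = Nat.card ι := by
  rw [← WithBot.coe_inj]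
  refine (le_antisymm (Ideal.height_le_ringKrullDim_of_ne_top Ideal.IsPrime.ne_top') ?_).trans
    ringKrullDim_mvPolynomial_complex
  refine ringKrullDim_le_iff_isMaximal_height_le _ |>.2 fun m hm => ?_
  obtain ⟨y, rfl⟩ := eq_vanishingIdeal_singleton_of_isMaximal ℂ hm
  have : vanishingIdeal ℂ {y} = pointIdeal y := by
    ext p
    simp [pointIdeal, mem_vanishingIdeal_iff, aeval_eq_eval]
  rw [this]
  exact_mod_cast height_pointIdeal_le y x

lemma zDim_add_one_le [Finite ι] {T : Set (ι → ℂ)} {p : MvPolynomial ι ℂ} (hp : p ≠ 0)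
    (hT : p ∈ vanishingIdealOf T) : zDim T + 1 ≤ Nat.card ι := by
  have hle : Ideal.span {p} ≤ vanishingIdealOf T := (Ideal.span_singleton_le_iff_mem _).2 hT
  calc zDim T + 1 ≤ ringKrullDim (MvPolynomial ι ℂ ⧸ Ideal.span {p}) + 1 := by
        gcongr
        exact (zDim_le_ringKrullDim T).trans <|
          ringKrullDim_le_of_surjective _ (Ideal.Quotient.factor_surjective hle)
    _ ≤ ringKrullDim (MvPolynomial ι ℂ) := ringKrullDim_quotient_succ_le_of_nonZeroDivisor
        (mem_nonZeroDivisors_of_ne_zero hp)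
    _ = Nat.card ι := ringKrullDim_mvPolynomial_complex

lemma height_le_krullDim_add_one {R : Type*} [CommRing R] [IsNoetherianRing R] {r : R}
    {m : PrimeSpectrum R} (hr : r ∈ m.asIdeal) :
    (m.asIdeal.height : WithBot ℕ∞) ≤
      Order.krullDim {P : PrimeSpectrum R | P ≤ m ∧ r ∈ P.asIdeal} + 1 := by
  have hle : Ideal.span {r} ≤ m.asIdeal := (Ideal.span_singleton_le_iff_mem _).2 hr
  let φ := (Ideal.span {r}).primeSpectrumQuotientOrderIsoZeroLocus
  let m' : PrimeSpectrum (R ⧸ Ideal.span {r}) := φ.symm ⟨m, hle⟩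
  have φ_mem (P : PrimeSpectrum (R ⧸ Ideal.span {r})) : r ∈ (φ P).1.asIdeal :=
    (φ P).2 (Ideal.mem_span_singleton_self r)
  have φ_le (P : Set.Iic m') : (φ P.1).1 ≤ m := φ.le_symm_apply.1 P.2
  calc (m.asIdeal.height : WithBot ℕ∞) ≤ m'.asIdeal.height + 1 :=
        WithBot.coe_le_coe.2 (Ideal.height_le_height_add_one_of_mem hr)
    _ ≤ _ := by
      gcongr
      rw [PrimeSpectrum.height_eq_orderHeight, Order.height_eq_krullDim_Iic]
      exact Order.krullDim_le_of_strictMono (fun P => ⟨(φ P.1).1, φ_le P, φ_mem P.1⟩)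
        fun P P' hlt => φ.strictMono hlt

lemma card_le_zDim_inter_add_one [Finite ι] {T U : Set (ι → ℂ)} {p : MvPolynomial ι ℂ}
    (hT : {x | eval x p = 0} ⊆ T) (hU : zOpen U) {a : ι → ℂ} (ha : eval a p = 0) (haU : a ∈ U) :
    Nat.card ι ≤ zDim (T ∩ U) + 1 := by
  rw [← WithBot.coe_natCast, ← height_pointIdeal a]
  refine (height_le_krullDim_add_one (m := ⟨pointIdeal a, inferInstance⟩) ha).trans ?_
  gcongr
  refine krullDim_le_zDim _ fun P hP => ?_
  have hPT : vanishSet (P.asIdeal : Set (MvPolynomial ι ℂ)) ⊆ T := fun x hx => hT (hx p hP.2)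
  rw [← Set.inter_assoc, Set.inter_eq_left.2 hPT]
  exact vanishingIdealOf_vanishSet_inter _ hU ⟨a, fun q hq => hP.1 hq, haU⟩

end Zariski

/-! ## Smooth points of hypersurfaces -/

section Differential

open MvPolynomial

variable {R ι : Type*} [CommRing R] [Fintype ι]

/-- The differential `df_a` of a polynomial `f` at a point `a`, as a linear form. -/
def differential (f : MvPolynomial ι R) (a : ι → R) : (ι → R) →ₗ[R] R :=
  ∑ i, eval a (pderiv i f) • LinearMap.proj i

lemma differential_apply (f : MvPolynomial ι R) (a w : ι → R) :
    differential f a w = ∑ i, w i * eval a (pderiv i f) := by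
  simp [differential, mul_comm]

lemma differential_mul (f g : MvPolynomial ι R) (a : ι → R) :
    differential (f * g) a = eval a g • differential f a + eval a f • differential g a := by
  ext w
  simp only [differential_apply, Derivation.leibniz, smul_eq_mul, map_add, map_mul, mul_add,
    Finset.sum_add_distrib, LinearMap.add_apply, LinearMap.smul_apply, Finset.mul_sum]
  rw [add_comm]
  congr 1 <;> exact Finset.sum_congr rfl fun i _ => by ring

end Differential

section Smooth

open MvPolynomial

lemma exists_prime_dvd_eval_eq_zero {K σ : Type*} [Field K] {p : MvPolynomial σ K} (hp : p ≠ 0)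
    {a : σ → K} (ha : eval a p = 0) : ∃ q, Prime q ∧ q ∣ p ∧ eval a q = 0 := by
  obtain ⟨s, hs, hsp⟩ := UniqueFactorizationMonoid.exists_prime_factors p hp
  have hsa : s.prod ∈ RingHom.ker (eval a) := Ideal.mem_of_dvd _ hsp.symm.dvd ha
  obtain ⟨q, hq, hqa⟩ := ((RingHom.ker_isPrime _).multiset_prod_mem_iff_exists_mem s).1 hsa
  exact ⟨q, hs q hq, (Multiset.dvd_prod hq).trans hsp.dvd, hqa⟩

variable {ι : Type*}

lemma zLocalDim_le_zDim (X : Set (ι → ℂ)) (a : ι → ℂ) : zLocalDim X a ≤ zDim X :=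
  (iInf₂_le Set.univ (@isOpen_univ _ (zTop ι))).trans <|
    (iInf_le _ trivial).trans_eq (by rw [Set.inter_univ])

lemma vanishingIdealOf_le_span [Finite ι] {S : Set (ι → ℂ)} {q D : MvPolynomial ι ℂ}
    (hq : Prime q) {a : ι → ℂ} (hqa : eval a q = 0) (hDa : eval a D ≠ 0)
    (hS : ∀ x, eval x q = 0 → eval x D ≠ 0 → x ∈ S) : vanishingIdealOf S ≤ Ideal.span {q} := by
  have : (Ideal.span {q}).IsPrime := (Ideal.span_singleton_prime hq.ne_zero).2 hq
  have ha : a ∈ vanishSet (Ideal.span {q} : Set (MvPolynomial ι ℂ)) := fun p hp => by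
    obtain ⟨r, rfl⟩ := Ideal.mem_span_singleton.1 hp
    simp [hqa]
  rw [← vanishingIdealOf_vanishSet_inter _ (zOpen_setOf_eval_ne_zero D) ⟨a, ha, hDa⟩]
  exact vanishingIdealOf_anti fun x hx => hS x (hx.1 q (Ideal.mem_span_singleton_self q)) hx.2

variable [Fintype ι]

lemma mem_tangentSpace {X : Set (ι → ℂ)} {a u : ι → ℂ} :
    u ∈ tangentSpace X a ↔ ∀ p ∈ vanishingIdealOf X, differential p a u = 0 := by
  simp only [differential_apply]
  rfl

section Hypersurface

variable {X : Set (ι → ℂ)} {p q : MvPolynomial ι ℂ} {a : ι → ℂ}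

lemma tangentSpace_eq_ker_differential (hpX : p ∈ vanishingIdealOf X)
    (hX : vanishingIdealOf X ≤ Ideal.span {q}) (hqa : eval a q = 0) (hp : differential p a ≠ 0) :
    tangentSpace X a = LinearMap.ker (differential p a) := by
  have differential_mul_left (r : MvPolynomial ι ℂ) :
      differential (q * r) a = eval a r • differential q a := by simp [differential_mul, hqa]
  refine le_antisymm (fun u hu => mem_tangentSpace.1 hu p hpX) fun u hu => ?_
  obtain ⟨r, rfl⟩ := Ideal.mem_span_singleton.1 (hX hpX)
  rw [differential_mul_left, smul_ne_zero_iff] at hp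
  have hqu : differential q a u = 0 := by
    rw [LinearMap.mem_ker, differential_mul_left] at hu
    exact (smul_eq_zero.1 hu).resolve_left hp.1
  refine mem_tangentSpace.2 fun h hh => ?_
  obtain ⟨s, rfl⟩ := Ideal.mem_span_singleton.1 (hX hh)
  rw [differential_mul_left, LinearMap.smul_apply, hqu, smul_zero]

lemma smoothAt_of_vanishingIdealOf_le_span (hpX : p ∈ vanishingIdealOf X)
    (hX : vanishingIdealOf X ≤ Ideal.span {q}) (hqX : {x | eval x q = 0} ⊆ X)
    (hqa : eval a q = 0) (hp : differential p a ≠ 0) : smoothAt X a := by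
  have hfinrank : Module.finrank ℂ (tangentSpace X a) + 1 = Nat.card ι := by
    rw [tangentSpace_eq_ker_differential hpX hX hqa hp,
      Module.Dual.finrank_ker_add_one_of_ne_zero (f := differential p a) hp,
      Module.finrank_fintype_fun_eq_card, Nat.card_eq_fintype_card]
  have hp0 : p ≠ 0 := by
    rintro rfl
    simp [differential] at hp
  refine le_antisymm (le_iInf fun U => le_iInf₂ fun hU haU => ?_)
    ((zLocalDim_le_zDim X a).trans ?_) <;> rw [← ENat.WithBot.add_le_add_one_right_iff]
  · have := card_le_zDim_inter_add_one hqX hU hqa haU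
    rw [← hfinrank] at this
    exact_mod_cast this
  · have := zDim_add_one_le hp0 hpX
    rw [← hfinrank] at this
    exact_mod_cast this

end Hypersurface

lemma smoothAt_zClosure {S : Set (ι → ℂ)} {p D : MvPolynomial ι ℂ} {a : ι → ℂ}
    (hpS : ∀ x ∈ S, eval x p = 0) (hS : ∀ x, eval x p = 0 → eval x D ≠ 0 → x ∈ S)
    (ha : a ∈ zClosure S) (hDa : eval a D ≠ 0) (hp : differential p a ≠ 0) :
    smoothAt (zClosure S) a := by
  have hpa : eval a p = 0 := by
    rw [zClosure_eq_vanishSet] at ha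
    exact ha p hpS
  have hp0 : p ≠ 0 := by
    rintro rfl
    simp [differential] at hp
  obtain ⟨q, hq, hqp, hqa⟩ := exists_prime_dvd_eval_eq_zero hp0 hpa
  have hle : vanishingIdealOf (zClosure S) ≤ Ideal.span {q} := by
    rw [vanishingIdealOf_zClosure]
    refine vanishingIdealOf_le_span hq hqa hDa fun x hqx hDx => hS x ?_ hDx
    obtain ⟨r, rfl⟩ := hqp
    simp [hqx]
  refine smoothAt_of_vanishingIdealOf_le_span (p := p) ?_ hle ?_ hqa hp
  · rwa [vanishingIdealOf_zClosure]
  · intro x hqx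
    rw [zClosure_eq_vanishSet, ← vanishingIdealOf_zClosure]
    intro h hh
    obtain ⟨r, rfl⟩ := Ideal.mem_span_singleton.1 (hle hh)
    simpa using Or.inl hqx

end Smooth

/-! ## The kernel of the Kalman matrix -/

section DualNumber

open MvPolynomial Matrix TrivSqZeroExt

variable {R ι κ : Type*} [CommRing R] (f : MvPolynomial ι R) (v w : ι → R)

/-- The vector `v + εw` over the dual numbers. -/
def dualVec : ι → DualNumber R := fun i => inl (v i) + inr (w i)

/-- The matrix `M + εB` over the dual numbers. -/
def dualMatrix (M B : Matrix κ ι R) : Matrix κ ι (DualNumber R) :=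
  of fun i j => inl (M i j) + inr (B i j)

lemma dualMatrix_mulVec_dualVec [Fintype ι] (M B : Matrix κ ι R) :
    dualMatrix M B *ᵥ dualVec v w = dualVec (M *ᵥ v) (M *ᵥ w + B *ᵥ v) := by
  ext i
  · simp [mulVec, dotProduct, dualVec, dualMatrix, fst_sum]
  · simp [mulVec, dotProduct, dualVec, dualMatrix, snd_sum, Finset.sum_add_distrib, mul_comm,
      add_comm]

lemma dualMatrix_zero (M : Matrix κ ι R) : dualMatrix M 0 = M.map (inlHom R R) := by
  ext i j <;> simp [dualMatrix]

lemma map_inlHom_mulVec_dualVec [Fintype ι] (M : Matrix κ ι R) :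
    M.map (inlHom R R) *ᵥ dualVec v w = dualVec (M *ᵥ v) (M *ᵥ w) := by
  rw [← dualMatrix_zero, dualMatrix_mulVec_dualVec, zero_mulVec, add_zero]

lemma fst_aeval_dualVec : (aeval (dualVec v w) f).fst = eval v f := by
  refine (comp_aeval_apply _ (fstHom R R R) f).trans ?_
  simp [dualVec, aeval_eq_eval]

lemma snd_aeval_dualVec [Fintype ι] :
    (aeval (dualVec v w) f).snd = differential f v w := by
  classical
  induction f using MvPolynomial.induction_on with
  | C a => simp [differential_apply, algebraMap_eq_inl]
  | add p q hp hq => simp_all [differential_apply, mul_add, Finset.sum_add_distrib]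
  | mul_X p i hp =>
    rw [map_mul, aeval_X, snd_mul, hp, fst_aeval_dualVec, differential_mul]
    simp [differential_apply, pderiv_X, Pi.single_apply, dualVec, mul_comm, add_comm]

lemma aeval_dualVec [Fintype ι] :
    aeval (dualVec v w) f = inl (eval v f) + inr (differential f v w) := by
  ext
  · simp [fst_aeval_dualVec]
  · simp [snd_aeval_dualVec]

end DualNumber

section LinearForm

open MvPolynomial

lemma exists_dotProduct_eq {K ι κ : Type*} [Field K] [Fintype ι] [Finite κ] {v : κ → ι → K}
    (hv : LinearIndependent K v) (c : κ → K) : ∃ l, ∀ j, l ⬝ᵥ v j = c j := by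
  classical
  have := Fintype.ofFinite κ
  obtain ⟨φ, hφ⟩ := (Fintype.linearCombination K v).exists_leftInverse_of_injective
    (LinearMap.ker_eq_bot.2 hv.fintypeLinearCombination_injective)
  refine ⟨(dotProductEquiv K ι).symm (Fintype.linearCombination K c ∘ₗ φ), fun j => ?_⟩
  rw [← dotProductEquiv_apply_apply, LinearEquiv.apply_symm_apply]
  have := DFunLike.congr_fun hφ (Pi.single j 1)
  simp only [LinearMap.comp_apply, Fintype.linearCombination_apply_single, one_smul] at this
  simp [this]

variable {R ι : Type*} [CommRing R] [Fintype ι]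

/-- The linear form with coefficient vector `l`. -/
def linForm (l : ι → R) : MvPolynomial ι R := ∑ i, C (l i) * X i

lemma isHomogeneous_linForm (l : ι → R) : (linForm l).IsHomogeneous 1 :=
  IsHomogeneous.sum _ _ _ fun i _ => isHomogeneous_C_mul_X _ i

lemma eval_linForm (l x : ι → R) : eval x (linForm l) = l ⬝ᵥ x := by
  simp [linForm, dotProduct]

lemma differential_linForm (l x w : ι → R) : differential (linForm l) x w = l ⬝ᵥ w := by
  classical
  simp [linForm, differential_apply, dotProduct, pderiv_X, Pi.single_apply, mul_comm]

end LinearForm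

section Veronese

open MvPolynomial Matrix TrivSqZeroExt

variable {R S : Type*} [CommRing R] [CommRing S] {n d : ℕ}

lemma monExp_injective : Function.Injective (monExp : MonIdx n d → Fin n →₀ ℕ) :=
  Multiset.toFinsupp.injective.comp Sym.coe_injective

lemma degree_monExp (σ : MonIdx n d) : (monExp σ).degree = d :=
  (Multiset.toFinsupp_sum_eq (σ : Multiset (Fin n))).trans Sym.card_coe

lemma exists_monExp_eq {s : Fin n →₀ ℕ} (hs : s.degree = d) : ∃ σ : MonIdx n d, monExp σ = s :=
  ⟨⟨Finsupp.toMultiset s, by rw [Finsupp.card_toMultiset, ← hs]; rfl⟩, by simp [monExp]⟩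

/-- The vector of all monomials of degree `d` in the coordinates of `v`, i.e. the image of `v`
under the `d`-th Veronese map. -/
def monVec (d : ℕ) (v : Fin n → R) : MonIdx n d → R := fun σ => ∏ j, v j ^ monExp σ j

lemma coeff_dotProduct_monVec {g : MvPolynomial (Fin n) R} (hg : g.IsHomogeneous d)
    (v : Fin n → R) : (fun σ => coeff (monExp σ) g) ⬝ᵥ monVec d v = eval v g := by
  classical
  have hsupp : g.support ⊆ Finset.univ.image (monExp (d := d)) := fun s hs => by
    obtain ⟨σ, hσ⟩ := exists_monExp_eq (d := d) (s := s) <| by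
      rw [Finsupp.degree_eq_weight_one]
      exact hg (mem_support_iff.1 hs)
    exact hσ ▸ Finset.mem_image_of_mem _ (Finset.mem_univ σ)
  rw [eval_eq', Finset.sum_subset hsupp fun s _ hs => by rw [notMem_support_iff.1 hs, zero_mul],
    Finset.sum_image monExp_injective.injOn]
  rfl

lemma symPow_mulVec_monVec (A : Matrix (Fin n) (Fin n) R) (v : Fin n → R) :
    symPow d A *ᵥ monVec d v = monVec d (A *ᵥ v) := by
  ext τ
  have isHomogeneous : (∏ j : Fin n, (∑ k, C (A j k) * X k) ^ monExp τ j :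
      MvPolynomial (Fin n) R).IsHomogeneous d := by
    have := IsHomogeneous.prod Finset.univ (fun j => linForm (A j) ^ monExp τ j) _
      fun j _ => (isHomogeneous_linForm (A j)).pow (monExp τ j)
    simpa only [one_mul, ← Finsupp.degree_eq_sum, degree_monExp, linForm] using this
  refine (coeff_dotProduct_monVec isHomogeneous v).trans ?_
  simp [monVec, mulVec, dotProduct]

lemma symPow_pow_mulVec_monVec (A : Matrix (Fin n) (Fin n) R) (i : ℕ) (v : Fin n → R) :
    symPow d A ^ i *ᵥ monVec d v = monVec d (A ^ i *ᵥ v) := by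
  induction i generalizing v with
  | zero => simp
  | succ i ih => rw [pow_succ, ← mulVec_mulVec, symPow_mulVec_monVec, ih, mulVec_mulVec, ← pow_succ]

lemma map_symPow (φ : R →+* S) (A : Matrix (Fin n) (Fin n) R) :
    (symPow d A).map φ = symPow d (A.map φ) := by
  ext τ σ
  simp [symPow, ← coeff_map]

lemma map_genMat (A : MatSpace n) : (genMat n).map (eval A) = toMat A := by
  ext i j
  simp [genMat, toMat]

/-- The derivative of the Veronese map `monVec d` at `v` in the direction `w`. -/
def monVecDeriv (d : ℕ) (v w : Fin n → R) : MonIdx n d → R := snd ∘ monVec d (dualVec v w)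

lemma monVec_dualVec (v w : Fin n → R) :
    monVec d (dualVec v w) = dualVec (monVec d v) (monVecDeriv d v w) := by
  ext σ
  · refine (map_prod (fstHom R R R) _ _).trans ?_
    simp [dualVec, monVec]
  · simp [monVecDeriv, dualVec]

lemma coeff_dotProduct_monVecDeriv {g : MvPolynomial (Fin n) R} (hg : g.IsHomogeneous d)
    (v w : Fin n → R) :
    (fun σ => coeff (monExp σ) g) ⬝ᵥ monVecDeriv d v w = differential g v w := by
  have snd_eval : (eval (dualVec v w) (map (inlHom R R) g)).snd = differential g v w := by
    rw [eval_map, ← algebraMap_eq_inlHom, ← aeval_def, snd_aeval_dualVec]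
  rw [← snd_eval, ← coeff_dotProduct_monVec (hg.map _), monVec_dualVec]
  simp [dotProduct, dualVec, snd_sum, MvPolynomial.coeff_map]

lemma symPow_pow_mulVec_monVecDeriv (A : Matrix (Fin n) (Fin n) R) (i : ℕ) (v w : Fin n → R) :
    symPow d A ^ i *ᵥ monVecDeriv d v w = monVecDeriv d (A ^ i *ᵥ v) (A ^ i *ᵥ w) := by
  have := symPow_pow_mulVec_monVec (d := d) (A.map (inlHom R R)) i (dualVec v w)
  rw [← map_symPow, ← Matrix.map_pow, ← Matrix.map_pow, map_inlHom_mulVec_dualVec, monVec_dualVec,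
    monVec_dualVec, map_inlHom_mulVec_dualVec] at this
  ext σ
  simpa [dualVec] using congrArg snd (congrFun this σ)

section Field

variable {K : Type*} [Field K] {v w : Fin n → K}

lemma linearIndependent_monVec (hd : d ≠ 0) (hvw : LinearIndependent K ![v, w]) :
    LinearIndependent K ![monVec d v, monVec d w] := by
  refine LinearIndependent.pair_iff.2 fun α β h => ?_
  have eval_linForm_pow (l : Fin n → K) : α * (l ⬝ᵥ v) ^ d + β * (l ⬝ᵥ w) ^ d = 0 := by
    have hl : (linForm l ^ d).IsHomogeneous d := by simpa using (isHomogeneous_linForm l).pow d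
    simpa [coeff_dotProduct_monVec hl, eval_linForm] using
      congrArg ((fun σ => coeff (monExp σ) (linForm l ^ d)) ⬝ᵥ ·) h
  obtain ⟨l, hl⟩ := exists_dotProduct_eq hvw ![1, 0]
  obtain ⟨m, hm⟩ := exists_dotProduct_eq hvw ![0, 1]
  simp only [Fin.forall_fin_two, cons_val_zero, cons_val_one] at hl hm
  have hα := eval_linForm_pow l
  have hβ := eval_linForm_pow m
  simp_all

lemma linearIndependent_monVec_monVecDeriv (hd : d ≠ 0) (hvw : LinearIndependent K ![v, w]) :
    LinearIndependent K ![monVec d v, monVecDeriv d v w] := by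
  refine LinearIndependent.pair_iff.2 fun α β h => ?_
  obtain ⟨k, rfl⟩ := Nat.exists_eq_succ_of_ne_zero hd
  have eval_add_differential {g : MvPolynomial (Fin n) K} (hg : g.IsHomogeneous (k + 1)) :
      α * eval v g + β * differential g v w = 0 := by
    simpa [coeff_dotProduct_monVec hg, coeff_dotProduct_monVecDeriv hg] using
      congrArg ((fun σ => coeff (monExp σ) g) ⬝ᵥ ·) h
  obtain ⟨l, hl⟩ := exists_dotProduct_eq hvw ![1, 0]
  obtain ⟨m, hm⟩ := exists_dotProduct_eq hvw ![0, 1]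
  simp only [Fin.forall_fin_two, cons_val_zero, cons_val_one] at hl hm
  have differential_pow (j : ℕ) : differential (linForm l ^ j) v w = 0 := by
    induction j with
    | zero => simp [differential]
    | succ j ih => simp [pow_succ, differential_mul, ih, differential_linForm, hl]
  have hlk : (linForm l ^ k).IsHomogeneous k := by simpa using (isHomogeneous_linForm l).pow k
  have hα := eval_add_differential (hlk.mul (isHomogeneous_linForm l))
  have hβ := eval_add_differential (hlk.mul (isHomogeneous_linForm m))
  simp_all [differential_mul, differential_linForm, eval_linForm]

end Field

end Veronese

section KalmanKer

open MvPolynomial Matrix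

variable {n d : ℕ} {f : MvPolynomial (Fin n) ℂ} {A : MatSpace n} {v w : Fin n → ℂ}

/-- The kernel of the Kalman matrix `K_d(f)` evaluated at the matrix `A`. -/
def kalmanKer (d : ℕ) (f : MvPolynomial (Fin n) ℂ) (A : MatSpace n) :
    Submodule ℂ (MonIdx n d → ℂ) :=
  LinearMap.ker ((kalmanSq d (coeffVec d f)).map (eval A)).mulVecLin

lemma finrank_kalmanKer_le_one {m : Type*} [Fintype m] [DecidableEq m] {e₁ e₂ : m → MonIdx n d}
    (hm : Fintype.card (MonIdx n d) - 1 ≤ Fintype.card m)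
    (h : eval A (det (of fun i j => kalmanSq d (coeffVec d f) (e₁ i) (e₂ j))) ≠ 0) :
    Module.finrank ℂ (kalmanKer d f A) ≤ 1 := by
  rw [RingHom.map_det] at h
  set M := (kalmanSq d (coeffVec d f)).map (eval A)
  have rank_minor : (M.submatrix e₁ e₂).rank = Fintype.card m := rank_of_det_ne_zero h
  have rank_minor_le : (M.submatrix e₁ e₂).rank ≤ M.rank := rank_submatrix_le M e₁ e₂
  have rank_add_nullity :
      M.rank + Module.finrank ℂ (kalmanKer d f A) = Fintype.card (MonIdx n d) := by
    rw [← Module.finrank_fintype_fun_eq_card ℂ]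
    exact M.mulVecLin.finrank_range_add_finrank_ker
  omega

lemma map_eval_kalmanSq (c : MonIdx n d → ℂ) (σ : MonIdx n d) :
    (kalmanSq d c).map (eval A) σ =
      c ᵥ* symPow d (toMat A) ^ (Fintype.equivFin (MonIdx n d) σ : ℕ) := by
  ext τ
  rw [← map_genMat, ← map_symPow, ← Matrix.map_pow]
  simp [kalmanSq, vecMul, dotProduct]

lemma mem_kalmanKer {z : MonIdx n d → ℂ}
    (hz : ∀ i : ℕ, coeffVec d f ⬝ᵥ symPow d (toMat A) ^ i *ᵥ z = 0) : z ∈ kalmanKer d f A := by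
  refine LinearMap.mem_ker.2 (funext fun σ => ?_)
  rw [mulVecLin_apply, mulVec, map_eval_kalmanSq, ← dotProduct_mulVec, hz]
  rfl

lemma monVec_mem_kalmanKer (hf : f.IsHomogeneous d)
    (hv : ∀ i : ℕ, eval (toMat A ^ i *ᵥ v) f = 0) : monVec d v ∈ kalmanKer d f A :=
  mem_kalmanKer fun i => by
    rw [symPow_pow_mulVec_monVec, ← hv i]
    exact coeff_dotProduct_monVec hf _

lemma monVecDeriv_mem_kalmanKer (hf : f.IsHomogeneous d)
    (hw : ∀ i : ℕ, differential f (toMat A ^ i *ᵥ v) (toMat A ^ i *ᵥ w) = 0) :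
    monVecDeriv d v w ∈ kalmanKer d f A :=
  mem_kalmanKer fun i => by
    rw [symPow_pow_mulVec_monVecDeriv, ← hw i]
    exact coeff_dotProduct_monVecDeriv hf _ _

lemma not_linearIndependent_of_finrank_le_one {K V : Type*} [Field K] [AddCommGroup V] [Module K V]
    {W : Submodule K V} [FiniteDimensional K W] (hW : Module.finrank K W ≤ 1) {x y : V}
    (hx : x ∈ W) (hy : y ∈ W) : ¬ LinearIndependent K ![x, y] := by
  intro h
  have : LinearIndependent K ![(⟨x, hx⟩ : W), ⟨y, hy⟩] := by
    refine LinearIndependent.of_comp W.subtype ?_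
    convert h
    ext i
    fin_cases i <;> rfl
  simpa using this.fintype_card_le_finrank.trans hW

end KalmanKer

section Homogeneous

open MvPolynomial Matrix

variable {R ι : Type*} [CommRing R] {f : MvPolynomial ι R} {d : ℕ}

lemma eval_smul_of_isHomogeneous (hf : f.IsHomogeneous d) (c : R) (v : ι → R) :
    eval (c • v) f = c ^ d * eval v f := by
  rw [eval_eq, eval_eq, Finset.mul_sum]
  refine Finset.sum_congr rfl fun s hs => ?_
  have degree_eq : ∑ i ∈ s.support, s i = d := by
    by_contra hne
    exact mem_support_iff.1 hs (hf.coeff_eq_zero hne)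
  simp only [Pi.smul_apply, smul_eq_mul, mul_pow, Finset.prod_mul_distrib,
    Finset.prod_pow_eq_pow_sum, degree_eq]
  exact mul_left_comm _ _ _

lemma differential_smul_of_isHomogeneous [Fintype ι] (hf : f.IsHomogeneous d) (c : R)
    (v w : ι → R) :
    differential f (c • v) w = c ^ (d - 1) * differential f v w := by
  simp only [differential_apply, eval_smul_of_isHomogeneous hf.pderiv, mul_left_comm,
    Finset.mul_sum]

lemma differential_self_of_isHomogeneous [Fintype ι] (hf : f.IsHomogeneous d) (v : ι → R) :
    differential f v v = d * eval v f := by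
  simpa [differential_apply] using congrArg (eval v) hf.sum_X_mul_pderiv

lemma pow_mulVec_of_mulVec_eq_smul [Fintype ι] [DecidableEq ι] {A : Matrix ι ι R} {v : ι → R}
    {c : R} (hv : A *ᵥ v = c • v) (i : ℕ) : A ^ i *ᵥ v = c ^ i • v := by
  induction i with
  | zero => simp
  | succ i ih => rw [pow_succ, ← mulVec_mulVec, hv, mulVec_smul, ih, smul_smul, ← pow_succ']

/-- The restriction of `f` to the line `t ↦ v + tw`. -/
def linePoly (f : MvPolynomial ι R) (v w : ι → R) : Polynomial R :=
  aeval (fun i => Polynomial.C (v i) + Polynomial.C (w i) * Polynomial.X) f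

lemma eval_linePoly (f : MvPolynomial ι R) (v w : ι → R) (t : R) :
    (linePoly f v w).eval t = eval (v + t • w) f := by
  rw [linePoly, ← Polynomial.coe_aeval_eq_eval, comp_aeval_apply, ← aeval_eq_eval]
  congr
  ext i
  simp only [map_add, map_mul, Polynomial.aeval_C, Polynomial.aeval_X,
    Algebra.algebraMap_self_apply, Pi.add_apply, Pi.smul_apply, smul_eq_mul, mul_comm]

lemma aeval_eps_linePoly (f : MvPolynomial ι R) (v w : ι → R) :
    Polynomial.aeval (DualNumber.eps : DualNumber R) (linePoly f v w) = aeval (dualVec v w) f := by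
  rw [linePoly, comp_aeval_apply]
  congr
  ext i <;> simp [dualVec, TrivSqZeroExt.algebraMap_eq_inl]

variable {K : Type*} [Field K]

lemma exists_linearIndependent_of_eval_eq_zero [Infinite K] {f : MvPolynomial ι K}
    (hf : f.IsHomogeneous d) (hf0 : f ≠ 0) {v : ι → K} (hv : v ≠ 0) (hfv : eval v f = 0) :
    ∃ w, LinearIndependent K ![v, w] := by
  by_contra! h
  refine hf0 (MvPolynomial.funext fun x => ?_)
  have := h x
  simp only [LinearIndependent.pair_iff' hv, not_forall, not_not] at this
  obtain ⟨c, rfl⟩ := this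
  simp [eval_smul_of_isHomogeneous hf, hfv]

/-- If `f` has no zero on the line `w + tv`, then it is constant there, and homogenizing gives
`f (v + sw) = s ^ d f(w)`. -/
lemma linePoly_eq_C_mul_X_pow [IsAlgClosed K] {f : MvPolynomial ι K} (hf : f.IsHomogeneous d)
    {v w : ι → K} (h : ∀ t : K, eval (w + t • v) f ≠ 0) :
    linePoly f v w = Polynomial.C (eval w f) * Polynomial.X ^ d := by
  have degree_eq_zero : (linePoly f w v).degree = 0 := by
    by_contra hne
    obtain ⟨t, ht⟩ := IsAlgClosed.exists_root _ hne
    exact h t (by rwa [Polynomial.IsRoot, eval_linePoly] at ht)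
  have eval_const (t : K) : eval (w + t • v) f = eval w f := by
    rw [← eval_linePoly, Polynomial.eq_C_of_degree_eq_zero degree_eq_zero, Polynomial.eval_C,
      Polynomial.coeff_zero_eq_eval_zero, eval_linePoly, zero_smul, add_zero]
  refine Polynomial.eq_of_infinite_eval_eq _ _ ((Set.finite_singleton 0).infinite_compl.mono ?_)
  intro s (hs : s ≠ 0)
  have : v + s • w = s • (w + s⁻¹ • v) := by
    rw [smul_add, smul_smul, mul_inv_cancel₀ hs, one_smul, add_comm]
  rw [Set.mem_ofPred_eq, eval_linePoly, this, eval_smul_of_isHomogeneous hf, eval_const]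
  rw [Polynomial.eval_C_mul, Polynomial.eval_pow, Polynomial.eval_X, mul_comm]

lemma differential_eq_zero_of_forall_eval_ne_zero [Fintype ι] [IsAlgClosed K] {f : MvPolynomial ι K}
    (hf : f.IsHomogeneous d) (hd : 2 ≤ d) {v w : ι → K} (h : ∀ t : K, eval (w + t • v) f ≠ 0) :
    eval v f = 0 ∧ differential f v w = 0 := by
  have aeval_eq_zero : aeval (dualVec v w) f = 0 := by
    rw [← aeval_eps_linePoly, linePoly_eq_C_mul_X_pow hf h, map_mul, map_pow, Polynomial.aeval_X,
      pow_eq_zero_of_le hd (by rw [sq, DualNumber.eps_mul_eps]), mul_zero]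
  rw [← fst_aeval_dualVec, ← snd_aeval_dualVec, aeval_eq_zero]
  exact ⟨rfl, rfl⟩

end Homogeneous

section KalmanKerLeOne

open MvPolynomial Matrix

variable {n d : ℕ} {f : MvPolynomial (Fin n) ℂ} {A : MatSpace n} {v w : Fin n → ℂ}

lemma not_linearIndependent_of_forall_eval_eq_zero (hf : f.IsHomogeneous d) (hd : d ≠ 0)
    (hK : Module.finrank ℂ (kalmanKer d f A) ≤ 1) (hv : ∀ i : ℕ, eval (toMat A ^ i *ᵥ v) f = 0)
    (hw : ∀ i : ℕ, eval (toMat A ^ i *ᵥ w) f = 0) : ¬ LinearIndependent ℂ ![v, w] := fun hvw =>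
  not_linearIndependent_of_finrank_le_one hK (monVec_mem_kalmanKer hf hv)
    (monVec_mem_kalmanKer hf hw) (linearIndependent_monVec hd hvw)

lemma eval_pow_mulVec_eq_zero {A : Matrix (Fin n) (Fin n) ℂ} {c : ℂ} (hf : f.IsHomogeneous d)
    (hv : A *ᵥ v = c • v) (hfv : eval v f = 0) (i : ℕ) : eval (A ^ i *ᵥ v) f = 0 := by
  rw [pow_mulVec_of_mulVec_eq_smul hv, eval_smul_of_isHomogeneous hf, hfv, mul_zero]

lemma not_linearIndependent_of_eigenvectors (hf : f.IsHomogeneous d) (hd : d ≠ 0)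
    (hK : Module.finrank ℂ (kalmanKer d f A) ≤ 1) {a b : ℂ} (hv : toMat A *ᵥ v = a • v)
    (hfv : eval v f = 0) (hw : toMat A *ᵥ w = b • w) (hfw : eval w f = 0) :
    ¬ LinearIndependent ℂ ![v, w] :=
  not_linearIndependent_of_forall_eval_eq_zero hf hd hK (eval_pow_mulVec_eq_zero hf hv hfv)
    (eval_pow_mulVec_eq_zero hf hw hfw)

lemma exists_differential_pow_mulVec_ne_zero (hf : f.IsHomogeneous d) (hd : d ≠ 0)
    (hK : Module.finrank ℂ (kalmanKer d f A) ≤ 1) {a : ℂ} (hv : toMat A *ᵥ v = a • v)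
    (hfv : eval v f = 0) (hvw : LinearIndependent ℂ ![v, w]) :
    ∃ i : ℕ, differential f v (toMat A ^ i *ᵥ w) ≠ 0 := by
  by_contra! h
  refine not_linearIndependent_of_finrank_le_one hK
    (monVec_mem_kalmanKer hf (eval_pow_mulVec_eq_zero hf hv hfv))
    (monVecDeriv_mem_kalmanKer hf fun i => ?_) (linearIndependent_monVec_monVecDeriv hd hvw)
  rw [pow_mulVec_of_mulVec_eq_smul hv, differential_smul_of_isHomogeneous hf, h, mul_zero]

lemma differential_ne_zero_of_eigenvector (hf : f.IsHomogeneous d) (hd : d ≠ 0)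
    (hK : Module.finrank ℂ (kalmanKer d f A) ≤ 1) (hf0 : f ≠ 0) {a : ℂ}
    (hv : toMat A *ᵥ v = a • v) (hv0 : v ≠ 0) (hfv : eval v f = 0) : differential f v ≠ 0 := by
  obtain ⟨w, hvw⟩ := exists_linearIndependent_of_eval_eq_zero hf hf0 hv0 hfv
  obtain ⟨i, hi⟩ := exists_differential_pow_mulVec_ne_zero hf hd hK hv hfv hvw
  exact fun h => hi (by simp [h])

lemma differential_ne_zero_of_mulVec_mem_span (hf : f.IsHomogeneous d) (hd : d ≠ 0)
    (hK : Module.finrank ℂ (kalmanKer d f A) ≤ 1) {a b c : ℂ} (hv : toMat A *ᵥ v = a • v)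
    (hfv : eval v f = 0) (hvw : LinearIndependent ℂ ![v, w])
    (hw : toMat A *ᵥ w = b • w + c • v) : differential f v w ≠ 0 := by
  intro hdw
  have hdv : differential f v v = 0 := by
    rw [differential_self_of_isHomogeneous hf, hfv, mul_zero]
  obtain ⟨i, hi⟩ := exists_differential_pow_mulVec_ne_zero hf hd hK hv hfv hvw
  suffices ∃ x y : ℂ, toMat A ^ i *ᵥ w = x • w + y • v by
    obtain ⟨x, y, h⟩ := this
    simp [h, hdw, hdv] at hi
  clear hi
  induction i with
  | zero => exact ⟨1, 0, by simp⟩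
  | succ i ih =>
    obtain ⟨x, y, h⟩ := ih
    refine ⟨x * b, x * c + y * a, ?_⟩
    rw [pow_succ', ← mulVec_mulVec, h, mulVec_add, mulVec_smul, mulVec_smul, hw, hv]
    module

lemma exists_eval_add_smul_eq_zero (hf : f.IsHomogeneous d) (hd : 2 ≤ d)
    (hK : Module.finrank ℂ (kalmanKer d f A) ≤ 1) {a : ℂ} (hv : toMat A *ᵥ v = a • v)
    (hw : toMat A *ᵥ w = a • w) (hvw : LinearIndependent ℂ ![v, w]) :
    ∃ t : ℂ, eval (w + t • v) f = 0 := by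
  by_contra! h
  obtain ⟨hfv, hdf⟩ := differential_eq_zero_of_forall_eval_ne_zero hf hd h
  exact differential_ne_zero_of_mulVec_mem_span hf (by lia) hK hv hfv hvw
    (b := a) (c := 0) (by simp [hw]) hdf

/-- A line joining two points of an eigenspace meets the hypersurface `f = 0`; doing this twice
gives two eigenvectors on the hypersurface. -/
lemma not_linearIndependent_of_eigenspace (hf : f.IsHomogeneous d) (hd : 2 ≤ d)
    (hK : Module.finrank ℂ (kalmanKer d f A) ≤ 1) {a : ℂ} (hv : toMat A *ᵥ v = a • v)
    (hw : toMat A *ᵥ w = a • w) : ¬ LinearIndependent ℂ ![v, w] := by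
  intro hvw
  have mulVec_add_smul {x y : Fin n → ℂ} (hx : toMat A *ᵥ x = a • x) (hy : toMat A *ᵥ y = a • y)
      (t : ℂ) : toMat A *ᵥ (x + t • y) = a • (x + t • y) := by
    rw [mulVec_add, mulVec_smul, hx, hy, smul_add, smul_comm]
  obtain ⟨t, ht⟩ := exists_eval_add_smul_eq_zero hf hd hK hv hw hvw
  have hvt := (LinearIndependent.pair_add_smul_right_iff (c := t)).2 hvw
  rw [add_comm] at hvt
  have htv := LinearIndependent.pair_symm_iff.1 hvt
  obtain ⟨s, hs⟩ := exists_eval_add_smul_eq_zero hf hd hK (mulVec_add_smul hw hv t) hv htv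
  refine not_linearIndependent_of_eigenvectors hf (by lia) hK (mulVec_add_smul hw hv t) ht
    (mulVec_add_smul hv (mulVec_add_smul hw hv t) s) hs ?_
  exact add_comm v _ ▸ (LinearIndependent.pair_add_smul_right_iff (c := s)).2 htv

end KalmanKerLeOne

/-! ## Degree at least two -/

section DualMatrix

open Matrix TrivSqZeroExt

/-- The reduction `a + εb ↦ a` of the dual numbers. -/
abbrev fstRingHom (R : Type*) [CommRing R] : DualNumber R →+* R := fstHom R R R

lemma map_fst_dualMatrix {R κ ι : Type*} [CommRing R] (M B : Matrix κ ι R) :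
    (dualMatrix M B).map (fstRingHom R) = M := by
  ext i j
  simp [dualMatrix]

variable {R m : Type*} [CommRing R] [Fintype m]

lemma dualMatrix_mul (M B M' B' : Matrix m m R) :
    dualMatrix M B * dualMatrix M' B' = dualMatrix (M * M') (M * B' + B * M') := by
  ext i j
  · simp [mul_apply, dualMatrix, fst_sum]
  · simp [mul_apply, dualMatrix, snd_sum, Finset.sum_add_distrib, mul_comm]

variable [DecidableEq m]

lemma det_map_inlHom (M : Matrix m m R) : (M.map (inlHom R R)).det = inl M.det :=
  ((inlHom R R).map_det M).symm

lemma det_dualMatrix_updateRow (M : Matrix m m R) (i : m) (b : m → R) :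
    (dualMatrix M ((0 : Matrix m m R).updateRow i b)).det =
      inl M.det + inr (M.updateRow i b).det := by
  have eq_updateRow : dualMatrix M ((0 : Matrix m m R).updateRow i b) =
      (M.map (inlHom R R)).updateRow i
        ((M.map (inlHom R R)) i + (DualNumber.eps : DualNumber R) • (inlHom R R ∘ b)) := by
    ext k j <;> obtain rfl | hk := eq_or_ne k i <;> simp_all [dualMatrix, updateRow_apply]
  have eps_mul_inl (x : R) : (DualNumber.eps : DualNumber R) * inl x = inr x := by ext <;> simp
  rw [eq_updateRow, det_updateRow_add, updateRow_eq_self, det_updateRow_smul, ← map_updateRow,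
    det_map_inlHom, det_map_inlHom, eps_mul_inl]

lemma det_dualMatrix_single (M : Matrix m m R) (i j : m) :
    (dualMatrix M (Matrix.single j i 1)).det = inl M.det + inr (M.adjugate i j) := by
  rw [single_eq_updateRow_zero, det_dualMatrix_updateRow, adjugate_apply]

/-- `C + ε(PC - CP)` is the conjugate of `C` by `1 + εP`. -/
lemma det_dualMatrix_commutator (P C : Matrix m m R) :
    (dualMatrix C (P * C - C * P)).det = inl C.det := by
  have semiconj : dualMatrix C (P * C - C * P) * dualMatrix 1 P =
      dualMatrix 1 P * C.map (inlHom R R) := by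
    rw [← dualMatrix_zero, dualMatrix_mul, dualMatrix_mul]
    simp
  have isUnit_det : IsUnit (dualMatrix 1 P).det := by
    refine (isUnit_iff_isUnit_det _).1 (IsUnit.of_mul_eq_one (dualMatrix 1 (-P)) ?_)
    rw [dualMatrix_mul, mul_one, one_mul, mul_one, neg_add_cancel, dualMatrix_zero]
    exact Matrix.map_one _ (map_zero _) (map_one _)
  have := congrArg det semiconj
  rwa [det_mul, det_mul, mul_comm, isUnit_det.mul_right_inj, det_map_inlHom] at this

end DualMatrix

section Adjugate

open Matrix

lemma exists_mulVec_eq {K m : Type*} [Field K] [Fintype m] {v : m → K} (hv : v ≠ 0) (w : m → K) :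
    ∃ P : Matrix m m K, P *ᵥ v = w := by
  classical
  obtain ⟨i, hi⟩ := Function.ne_iff.1 hv
  refine ⟨vecMulVec w (Pi.single i (v i)⁻¹), ?_⟩
  rw [vecMulVec_mulVec, single_dotProduct, inv_mul_cancel₀ hi, MulOpposite.op_one, one_smul]

variable {K m : Type*} [Field K] [Fintype m] [DecidableEq m] {M : Matrix m m K}

lemma updateCol_mulVec (M : Matrix m m K) (i : m) (u z : m → K) :
    M.updateCol i u *ᵥ z = M *ᵥ z + z i • (u - M.col i) := by
  have : M.updateCol i u = M + vecMulVec (u - M.col i) (Pi.single i 1) := by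
    ext k j
    obtain rfl | hj := eq_or_ne j i <;> simp_all [vecMulVec_apply]
  rw [this, add_mulVec, vecMulVec_mulVec, single_one_dotProduct, op_smul_eq_smul]

lemma adjugate_mulVec_eq_zero {v w : m → K} (hvw : LinearIndependent K ![v, w])
    (hv : M *ᵥ v = 0) (hw : M *ᵥ w = 0) (u : m → K) : M.adjugate *ᵥ u = 0 := by
  rw [← cramer_eq_adjugate_mulVec]
  ext i
  rw [cramer_apply, Pi.zero_apply, ← exists_mulVec_eq_zero_iff]
  obtain ⟨z, hz, hMz, hzi⟩ : ∃ z ≠ 0, M *ᵥ z = 0 ∧ z i = 0 := by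
    by_cases hvi : v i = 0
    · exact ⟨v, hvw.ne_zero 0, hv, hvi⟩
    · refine ⟨w i • v + (-v i) • w, fun h => ?_, ?_, by simp [mul_comm]⟩
      · exact hvi (neg_eq_zero.1 (LinearIndependent.pair_iff.1 hvw _ _ h).2)
      · rw [mulVec_add, mulVec_smul, mulVec_smul, hv, hw, smul_zero, smul_zero, add_zero]
  exact ⟨z, hz, by rw [updateCol_mulVec, hMz, hzi, zero_smul, add_zero]⟩

/-- If `v i ≠ 0`, adding a vector outside the range of `M` to its `i`-th column makes `M`
injective. -/
lemma adjugate_ne_zero (hM : M.det = 0)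
    (h : ∀ v w, M *ᵥ v = 0 → M *ᵥ w = 0 → ¬ LinearIndependent K ![v, w]) : M.adjugate ≠ 0 := by
  intro hadj
  obtain ⟨v, hv0, hv⟩ := exists_mulVec_eq_zero_iff.2 hM
  obtain ⟨i, hi⟩ := Function.ne_iff.1 hv0
  obtain ⟨b, hb⟩ : ∃ b, ∀ x, M *ᵥ x ≠ b := by
    have : ¬ Function.Surjective M.mulVec := by
      rw [mulVec_surjective_iff_isUnit, isUnit_iff_isUnit_det, hM]
      exact not_isUnit_zero
    simpa [Function.Surjective] using this
  have hdet : (M.updateCol i (M.col i + b)).det = 0 := by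
    rw [← cramer_apply, cramer_eq_adjugate_mulVec, hadj, zero_mulVec, Pi.zero_apply]
  obtain ⟨z, hz0, hz⟩ := exists_mulVec_eq_zero_iff.2 hdet
  rw [updateCol_mulVec, add_sub_cancel_left] at hz
  have hzi : z i = 0 := by
    by_contra hzi
    refine hb (-(z i)⁻¹ • z) ?_
    rw [mulVec_smul, eq_neg_of_add_eq_zero_left hz, smul_neg, neg_smul, neg_neg, smul_smul,
      inv_mul_cancel₀ hzi, one_smul]
  rw [hzi, zero_smul, add_zero] at hz
  refine h z v hz hv ((LinearIndependent.pair_iff' hz0).2 fun c hc => hi ?_)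
  rw [← hc, Pi.smul_apply, hzi, smul_zero, Pi.zero_apply]

end Adjugate

section CharpolyRoot

open Matrix

variable {K m : Type*} [Field K] [Fintype m] [DecidableEq m] {M : Matrix m m K}

lemma scalar_mulVec {R : Type*} [CommRing R] (t : R) (v : m → R) : scalar m t *ᵥ v = t • v := by
  rw [scalar_apply, ← smul_one_eq_diagonal, smul_mulVec, one_mulVec]

lemma scalar_sub_mulVec_eq_zero {R : Type*} [CommRing R] {M : Matrix m m R} {t : R} {v : m → R} :
    (scalar m t - M) *ᵥ v = 0 ↔ M *ᵥ v = t • v := by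
  rw [sub_mulVec, sub_eq_zero, scalar_mulVec, eq_comm]

lemma mulVec_adjugate_mulVec {R : Type*} [CommRing R] {M : Matrix m m R} {t : R}
    (ht : M.charpoly.eval t = 0) (u : m → R) :
    M *ᵥ ((scalar m t - M).adjugate *ᵥ u) = t • ((scalar m t - M).adjugate *ᵥ u) := by
  rw [← scalar_sub_mulVec_eq_zero, mulVec_mulVec, mul_adjugate, ← eval_charpoly, ht, zero_smul,
    zero_mulVec]

lemma eval_charpoly_eq_zero {t : K} {v : m → K} (hv0 : v ≠ 0) (hv : M *ᵥ v = t • v) :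
    M.charpoly.eval t = 0 := by
  rw [eval_charpoly]
  exact exists_mulVec_eq_zero_iff.1 ⟨v, hv0, scalar_sub_mulVec_eq_zero.2 hv⟩

lemma det_aeval_eq_zero_iff [IsAlgClosed K] {g : Polynomial K} :
    (Polynomial.aeval M g).det = 0 ↔ ∃ t, M.charpoly.eval t = 0 ∧ g.eval t = 0 := by
  cases isEmpty_or_nonempty m
  · simp
  have spectrum_nonempty := spectrum.nonempty_of_isAlgClosed_of_finiteDimensional K M
  have := spectrum.map_polynomial_aeval_of_nonempty M g spectrum_nonempty
  rw [← not_ne_iff, ← isUnit_iff_ne_zero, ← isUnit_iff_isUnit_det, ← spectrum.zero_mem_iff K, this]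
  simp only [Set.mem_image, mem_spectrum_iff_isRoot_charpoly, Polynomial.IsRoot]

end CharpolyRoot

section DualPolynomial

open Polynomial TrivSqZeroExt

variable {R m : Type*} [CommRing R] [Fintype m] [DecidableEq m]

lemma fst_eval (P : (DualNumber R)[X]) (x : DualNumber R) :
    (P.eval x).fst = (P.map (fstRingHom R)).eval x.fst :=
  (eval_map_apply (f := fstRingHom R) x).symm

lemma snd_eval_inl_add_inr (P : (DualNumber R)[X]) (t c : R) :
    (P.eval (inl t + inr c)).snd =
      (P.eval (inl t)).snd + (P.map (fstRingHom R)).derivative.eval t * c := by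
  rw [eval_add_of_sq_eq_zero P _ _ (by rw [sq, inr_mul_inr]), snd_add, snd_mul, fst_eval,
    ← derivative_map]
  simp

lemma eval_map_inlHom (P : R[X]) (t c : R) :
    (P.map (inlHom R R)).eval (inl t + inr c) = inl (P.eval t) + inr (P.derivative.eval t * c) := by
  have eval_inl (Q : R[X]) : (Q.map (inlHom R R)).eval (inl t) = inl (Q.eval t) :=
    eval_map_apply (f := inlHom R R) t
  rw [eval_add_of_sq_eq_zero _ _ _ (by rw [sq, inr_mul_inr]), derivative_map, eval_inl, eval_inl]
  ext <;> simp [mul_comm]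

lemma det_aeval_X_sub_C (N : Matrix m m R) (a : R) :
    (aeval N (X - C a)).det = (-1) ^ Fintype.card m * N.charpoly.eval a := by
  rw [Matrix.eval_charpoly, ← Matrix.det_neg, map_sub, aeval_X, aeval_C, neg_sub]
  rfl

lemma det_aeval_map {S : Type*} [CommRing S] (φ : R →+* S) (M : Matrix m m R) (P : R[X]) :
    (aeval (M.map φ) (P.map φ)).det = φ (aeval M P).det := by
  have comp_eq : (algebraMap S (Matrix m m S)).comp φ =
      φ.mapMatrix.comp (algebraMap R (Matrix m m R)) := by
    ext r i j
    simp [Matrix.algebraMap_matrix_apply, apply_ite φ]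
  rw [RingHom.map_det, map_aeval_eq_aeval_map comp_eq, RingHom.mapMatrix_apply]

variable {K : Type*} [Field K] [IsAlgClosed K] {N : Matrix m m (DualNumber K)}
  {M : Matrix m m K} {G : (DualNumber K)[X]} {g : K[X]} {t : K}

/-- Since `g'(t) ≠ 0`, the root `t` of `g` lifts to a root of `G` over the dual numbers. -/
lemma det_aeval_ne_zero_of_derivative_ne_zero (hN : N.map (fstRingHom K) = M)
    (hG : G.map (fstRingHom K) = g) (ht : M.charpoly.eval t = 0) (hgt : g.eval t = 0)
    (hg : ∀ s, M.charpoly.eval s = 0 → g.eval s = 0 → s = t) (hg' : g.derivative.eval t ≠ 0)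
    (hne : (N.charpoly.eval (inl t)).snd * g.derivative.eval t ≠
      (G.eval (inl t)).snd * M.charpoly.derivative.eval t) :
    (aeval N G).det ≠ 0 := by
  obtain ⟨c, hc⟩ : ∃ c, (G.eval (inl t)).snd + g.derivative.eval t * c = 0 :=
    ⟨-(G.eval (inl t)).snd / g.derivative.eval t, by rw [mul_div_cancel₀ _ hg', add_neg_cancel]⟩
  have isRoot : G.IsRoot (inl t + inr c) := by
    ext
    · simp [fst_eval, hG, hgt]
    · rw [snd_eval_inl_add_inr, hG, hc, snd_zero]
  obtain ⟨Q, rfl⟩ := dvd_iff_isRoot.2 isRoot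
  have hgQ : g = (X - C t) * Q.map (fstRingHom K) := by simp [← hG]
  have isUnit_det_Q : IsUnit (aeval N Q).det := by
    rw [isUnit_iff_isUnit_fst, isUnit_iff_ne_zero]
    change fstRingHom K _ ≠ 0
    rw [← det_aeval_map, hN, Ne, det_aeval_eq_zero_iff]
    rintro ⟨s, hs, hQs⟩
    obtain rfl := hg s hs (by simp [hgQ, hQs])
    exact hg' (by simp [hgQ, derivative_mul, hQs])
  have charpoly_ne_zero : N.charpoly.eval (inl t + inr c) ≠ 0 := by
    intro h
    have h := congrArg TrivSqZeroExt.snd h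
    rw [snd_eval_inl_add_inr, ← Matrix.charpoly_map, hN, snd_zero] at h
    exact hne (by linear_combination g.derivative.eval t * h - M.charpoly.derivative.eval t * hc)
  rw [map_mul, Matrix.det_mul, Ne, isUnit_det_Q.mul_left_eq_zero, det_aeval_X_sub_C,
    (isUnit_neg_one.pow _).mul_right_eq_zero]
  exact charpoly_ne_zero

/-- The first-order deformation of an eigenvalue `t` of `M` along `N` and that of the root `t` of
`g` along `G` have different velocities, so the deformed `G(N)` is invertible at first order. If
`g'(t) = 0`, Cayley–Hamilton allows replacing `G` by `G + χ_N`. -/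
lemma det_aeval_ne_zero (hN : N.map (fstRingHom K) = M)
    (hG : G.map (fstRingHom K) = g) (ht : M.charpoly.eval t = 0) (hgt : g.eval t = 0)
    (hg : ∀ s, M.charpoly.eval s = 0 → g.eval s = 0 → s = t)
    (hne : (N.charpoly.eval (inl t)).snd * g.derivative.eval t ≠
      (G.eval (inl t)).snd * M.charpoly.derivative.eval t) :
    (aeval N G).det ≠ 0 := by
  by_cases hg' : g.derivative.eval t = 0
  · have hM' : M.charpoly.derivative.eval t ≠ 0 := by
      rintro hM'
      simp [hg', hM'] at hne
    have hNM : N.charpoly.map (fstRingHom K) = M.charpoly := by rw [← Matrix.charpoly_map, hN]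
    have aeval_add_charpoly : aeval N (G + N.charpoly) = aeval N G := by
      rw [map_add, Matrix.aeval_self_charpoly, add_zero]
    rw [← aeval_add_charpoly]
    refine det_aeval_ne_zero_of_derivative_ne_zero (t := t) hN (g := g + M.charpoly)
      (by rw [Polynomial.map_add, hG, hNM]) ht (by rw [eval_add, hgt, ht, add_zero])
      (fun s hs hgs => hg s hs (by rwa [eval_add, hs, add_zero] at hgs))
      (by rwa [derivative_add, eval_add, hg', zero_add]) fun h => hne ?_
    simp only [derivative_add, eval_add, snd_add] at h
    linear_combination h
  · exact det_aeval_ne_zero_of_derivative_ne_zero hN hG ht hgt hg hg' hne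

end DualPolynomial

section KalmanEq

open MvPolynomial Matrix

variable {R S T m : Type*} [CommRing R] [CommRing S] [Algebra R S] [CommRing T] [Algebra R T]
  [Fintype m] [DecidableEq m] (f : MvPolynomial m R) (M : Matrix m m S) (u : m → S)

/-- The vector `adj(x - M) u`, with polynomial entries in `x`: at a root of the characteristic
polynomial it is an eigenvector of `M`, or zero. -/
def resolventVec : m → Polynomial S := M.charmatrix.adjugate *ᵥ (Polynomial.C ∘ u)

/-- The polynomial `f(adj(x - M) u)` in `x`. -/
def resolventForm : Polynomial S := aeval (resolventVec M u) f

/-- The determinant of `g(M)`, where `g(x) = f(adj(x - M) u)`: up to sign, the resultant of `g` and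
the characteristic polynomial of `M`. -/
def kalmanEq : S := (Polynomial.aeval M (resolventForm f M u)).det

lemma resolventVec_map (φ : S →+* T) :
    resolventVec (M.map φ) (φ ∘ u) = Polynomial.map φ ∘ resolventVec M u := by
  ext1 i
  rw [resolventVec, charmatrix_map, ← Polynomial.coe_mapRingHom, ← RingHom.mapMatrix_apply,
    ← RingHom.map_adjugate, RingHom.mapMatrix_apply, Function.comp_apply, resolventVec,
    RingHom.map_mulVec]
  congr! 2
  ext j
  simp

lemma resolventForm_map (φ : S →ₐ[R] T) :
    resolventForm f (M.map φ) (φ ∘ u) = (resolventForm f M u).map φ := by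
  rw [resolventForm, resolventForm, ← Polynomial.coe_mapAlgHom, comp_aeval_apply]
  exact congrArg (fun y => aeval y f) (resolventVec_map M u (φ : S →+* T))

lemma kalmanEq_map (φ : S →ₐ[R] T) : kalmanEq f (M.map φ) (φ ∘ u) = φ (kalmanEq f M u) := by
  rw [kalmanEq, resolventForm_map]
  exact det_aeval_map (φ : S →+* T) M (resolventForm f M u)

lemma map_evalRingHom_charmatrix (t : S) :
    M.charmatrix.map (Polynomial.evalRingHom t) = scalar m t - M := by
  ext i j
  simp [charmatrix_apply, diagonal_apply, apply_ite (Polynomial.eval t)]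

lemma eval_resolventVec (t : S) (i : m) :
    (resolventVec M u i).eval t = ((scalar m t - M).adjugate *ᵥ u) i := by
  rw [← Polynomial.coe_evalRingHom, resolventVec, RingHom.map_mulVec, ← RingHom.mapMatrix_apply,
    RingHom.map_adjugate, RingHom.mapMatrix_apply, map_evalRingHom_charmatrix]
  congr! 2
  ext j
  simp

lemma eval_resolventForm (t : S) :
    (resolventForm f M u).eval t = aeval ((scalar m t - M).adjugate *ᵥ u) f := by
  refine (comp_aeval_apply _ ((Polynomial.aeval t).restrictScalars R) f).trans ?_
  exact congrArg (fun y => aeval y f) (funext (eval_resolventVec M u t))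

end KalmanEq

section KalmanEqField

open MvPolynomial Matrix

lemma exists_forall_mulVec_ne_zero {K ι κ m : Type*} [Field K] [Infinite K] [Finite ι] [Fintype m]
    {P : ι → Matrix κ m K} (hP : ∀ i, P i ≠ 0) : ∃ u, ∀ i, P i *ᵥ u ≠ 0 := by
  classical
  have exists_row (i : ι) : ∃ k, P i k ≠ 0 := Function.ne_iff.1 (hP i)
  choose k hk using exists_row
  obtain ⟨u, hu⟩ := Module.Dual.exists_forall_ne_zero_of_forall_exists
    (fun i => dotProductEquiv K m (P i (k i))) fun i => by
      by_contra! h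
      exact hk i ((dotProductEquiv K m).map_eq_zero_iff.1 (LinearMap.ext h))
  exact ⟨u, fun i h => hu i (congrFun h (k i))⟩

variable {K m : Type*} [Field K] [IsAlgClosed K] [Fintype m] [DecidableEq m]
  {f : MvPolynomial m K} {M : Matrix m m K} {u v b : m → K} {t : K} {d : ℕ}

lemma kalmanEq_eq_zero_iff :
    kalmanEq f M u = 0 ↔
      ∃ t, M.charpoly.eval t = 0 ∧ eval ((scalar m t - M).adjugate *ᵥ u) f = 0 := by
  simp only [kalmanEq, det_aeval_eq_zero_iff, eval_resolventForm, aeval_eq_eval]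

lemma kalmanEq_eq_zero (hf : f.IsHomogeneous d) (hv0 : v ≠ 0) (hv : M *ᵥ v = t • v)
    (hfv : eval v f = 0) (u : m → K) : kalmanEq f M u = 0 := by
  have ht := eval_charpoly_eq_zero hv0 hv
  refine kalmanEq_eq_zero_iff.2 ⟨t, ht, ?_⟩
  obtain ⟨c, hc⟩ : ∃ c : K, c • v = (scalar m t - M).adjugate *ᵥ u := by
    by_contra! h
    have hvu := (LinearIndependent.pair_iff' hv0).2 h
    exact hvu.ne_zero 1 (adjugate_mulVec_eq_zero hvu (scalar_sub_mulVec_eq_zero.2 hv)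
      (scalar_sub_mulVec_eq_zero.2 (mulVec_adjugate_mulVec ht u)) u)
  rw [← hc, eval_smul_of_isHomogeneous hf, hfv, mul_zero]

lemma exists_isEigenvector_of_kalmanEq_eq_zero (h : kalmanEq f M u = 0)
    (hb : kalmanEq (linForm b) M u ≠ 0) :
    ∃ v ≠ 0, (∃ t : K, M *ᵥ v = t • v) ∧ eval v f = 0 := by
  obtain ⟨t, ht, hft⟩ := kalmanEq_eq_zero_iff.1 h
  refine ⟨_, fun h0 => ?_, ⟨t, mulVec_adjugate_mulVec ht u⟩, hft⟩
  exact hb (kalmanEq_eq_zero_iff.2 ⟨t, ht, by rw [h0, eval_linForm, dotProduct_zero]⟩)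

lemma exists_kalmanEq_linForm_ne_zero
    (hM : ∀ t : K, M.charpoly.eval t = 0 → (scalar m t - M).adjugate ≠ 0) :
    ∃ u b : m → K, kalmanEq (linForm b) M u ≠ 0 := by
  have : Finite {t // M.charpoly.eval t = 0} :=
    Set.finite_coe_iff.2 (Polynomial.finite_setOfPred_isRoot M.charpoly_monic.ne_zero)
  obtain ⟨u, hu⟩ := exists_forall_mulVec_ne_zero
    (P := fun t : {t // M.charpoly.eval t = 0} => (scalar m t.1 - M).adjugate)
    fun t => hM t.1 t.2
  obtain ⟨b, hb⟩ := exists_forall_mulVec_ne_zero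
    (P := fun t : {t // M.charpoly.eval t = 0} =>
      replicateRow Unit ((scalar m t.1 - M).adjugate *ᵥ u))
    fun t h => hu t (funext fun i => congrFun₂ h () i)
  refine ⟨u, b, fun h => ?_⟩
  obtain ⟨t, ht, h⟩ := kalmanEq_eq_zero_iff.1 h
  refine hb ⟨t, ht⟩ (funext fun _ => ?_)
  rwa [eval_linForm, dotProduct_comm] at h

end KalmanEqField

section KalmanEqPoly

open MvPolynomial Matrix TrivSqZeroExt

variable {n : ℕ} (f : MvPolynomial (Fin n) ℂ) (u : Fin n → ℂ)

/-- The polynomial function `kalmanEq f · u` on the space of matrices. -/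
def kalmanEqPoly : MvPolynomial (Fin n × Fin n) ℂ := kalmanEq f (genMat n) (C ∘ u)

lemma aeval_kalmanEqPoly {S : Type*} [CommRing S] [Algebra ℂ S] (A : Fin n × Fin n → S) :
    aeval A (kalmanEqPoly f u) = kalmanEq f (of fun i j => A (i, j)) (algebraMap ℂ S ∘ u) := by
  rw [kalmanEqPoly, ← kalmanEq_map]
  congr! 1
  · ext i j
    simp [genMat]
  · ext i
    simp

lemma eval_kalmanEqPoly (A : MatSpace n) :
    eval A (kalmanEqPoly f u) = kalmanEq f (toMat A) u :=
  aeval_kalmanEqPoly f u A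

lemma kalmanEq_dualMatrix (A B : MatSpace n) :
    kalmanEq f (dualMatrix (toMat A) (toMat B)) (inl ∘ u) =
      inl (kalmanEq f (toMat A) u) + inr (differential (kalmanEqPoly f u) A B) := by
  rw [← eval_kalmanEqPoly, ← aeval_dualVec, aeval_kalmanEqPoly]
  rfl

end KalmanEqPoly

section Deformation

open MvPolynomial Matrix TrivSqZeroExt

variable {R m : Type*} [CommRing R] [Fintype m] [DecidableEq m] {C M B : Matrix m m R}

lemma exists_adjugate_dualMatrix_mulVec_eq_dualVec (h : (dualMatrix C B).det = 0) (u : m → R) :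
    ∃ w, (dualMatrix C B).adjugate *ᵥ (inl ∘ u) = dualVec (C.adjugate *ᵥ u) w ∧
      C *ᵥ w + B *ᵥ (C.adjugate *ᵥ u) = 0 := by
  set y := (dualMatrix C B).adjugate *ᵥ (inl ∘ u)
  have fst_y (i : m) : (y i).fst = (C.adjugate *ᵥ u) i := by
    change fstRingHom R _ = _
    rw [RingHom.map_mulVec, ← RingHom.mapMatrix_apply, RingHom.map_adjugate,
      RingHom.mapMatrix_apply, map_fst_dualMatrix]
    rfl
  have y_eq : y = dualVec (C.adjugate *ᵥ u) (fun i => (y i).snd) := by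
    ext i <;> simp [dualVec, fst_y]
  refine ⟨fun i => (y i).snd, y_eq, ?_⟩
  have mulVec_y : dualMatrix C B *ᵥ y = 0 := by
    rw [mulVec_mulVec, mul_adjugate, h, zero_smul, zero_mulVec]
  rw [y_eq, dualMatrix_mulVec_dualVec] at mulVec_y
  ext i
  simpa [dualVec] using congrArg TrivSqZeroExt.snd (congrFun mulVec_y i)

lemma scalar_sub_dualMatrix (M B : Matrix m m R) (t c : R) :
    scalar m (inl t + inr c) - dualMatrix M B = dualMatrix (scalar m t - M) (scalar m c - B) := by
  ext i j <;> simp [dualMatrix, diagonal_apply] <;> split_ifs <;> simp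

lemma eval_charpoly_dualMatrix (M B : Matrix m m R) (t c : R) :
    (dualMatrix M B).charpoly.eval (inl t + inr c) =
      (dualMatrix (scalar m t - M) (scalar m c - B)).det := by
  rw [eval_charpoly, scalar_sub_dualMatrix]

lemma eval_charpoly_dualMatrix_commutator (M P : Matrix m m R) (t : R) :
    (dualMatrix M (P * M - M * P)).charpoly.eval (inl t) = inl (M.charpoly.eval t) := by
  have commutator_eq : scalar m 0 - (P * M - M * P) =
      P * (scalar m t - M) - (scalar m t - M) * P := by
    rw [mul_sub, sub_mul, (scalar_commute t (Commute.all t) P).eq, map_zero]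
    abel
  have := eval_charpoly_dualMatrix M (P * M - M * P) t 0
  rwa [inr_zero, add_zero, commutator_eq, det_dualMatrix_commutator, ← eval_charpoly] at this

lemma exists_snd_eval_resolventForm_eq_differential {t c : R} (f : MvPolynomial m R)
    (h : (dualMatrix M B).charpoly.eval (inl t + inr c) = 0) (u : m → R) :
    ∃ w, ((resolventForm f (dualMatrix M B) (inl ∘ u)).eval (inl t + inr c)).snd =
        differential f ((scalar m t - M).adjugate *ᵥ u) w ∧
      (scalar m t - M) *ᵥ w + (scalar m c - B) *ᵥ ((scalar m t - M).adjugate *ᵥ u) = 0 := by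
  rw [eval_charpoly_dualMatrix] at h
  obtain ⟨w, hw, hCw⟩ := exists_adjugate_dualMatrix_mulVec_eq_dualVec h u
  exact ⟨w, by rw [eval_resolventForm, scalar_sub_dualMatrix, hw, snd_aeval_dualVec], hCw⟩

lemma resolventForm_dualMatrix_map_fst (f : MvPolynomial m R) (M B : Matrix m m R) (u : m → R) :
    (resolventForm f (dualMatrix M B) (inl ∘ u)).map (fstRingHom R) = resolventForm f M u := by
  have map_fst : (dualMatrix M B).map (fstHom R R R) = M := map_fst_dualMatrix M B
  have fst_comp_inl : fstHom R R R ∘ inl ∘ u = u := rfl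
  have h := resolventForm_map f (dualMatrix M B) (inl ∘ u) (fstHom R R R)
  rw [map_fst, fst_comp_inl] at h
  exact h.symm

lemma resolventForm_dualMatrix_zero (f : MvPolynomial m R) (M : Matrix m m R) (u : m → R) :
    resolventForm f (dualMatrix M 0) (inl ∘ u) = (resolventForm f M u).map (inlHom R R) := by
  rw [dualMatrix_zero]
  exact resolventForm_map f M u (inlAlgHom R R R)

end Deformation

section Gradient

open MvPolynomial Matrix TrivSqZeroExt

variable {n d : ℕ} {f : MvPolynomial (Fin n) ℂ} {A : MatSpace n} {u : Fin n → ℂ} {t : ℂ}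

lemma differential_kalmanEqPoly_ne_zero_of_velocity_ne
    {B : Matrix (Fin n) (Fin n) ℂ} (ht : (toMat A).charpoly.eval t = 0)
    (hft : (resolventForm f (toMat A) u).eval t = 0)
    (huniq : ∀ s, (toMat A).charpoly.eval s = 0 → (resolventForm f (toMat A) u).eval s = 0 → s = t)
    (hne : ((dualMatrix (toMat A) B).charpoly.eval (inl t)).snd *
        (resolventForm f (toMat A) u).derivative.eval t ≠
      ((resolventForm f (dualMatrix (toMat A) B) (inl ∘ u)).eval (inl t)).snd *
        (toMat A).charpoly.derivative.eval t) :
    differential (kalmanEqPoly f u) A ≠ 0 := by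
  intro h
  have kalmanEq_zero : kalmanEq f (toMat A) u = 0 :=
    det_aeval_eq_zero_iff.2 ⟨t, ht, hft⟩
  have := kalmanEq_dualMatrix f u A fun ij => B ij.1 ij.2
  rw [h, LinearMap.zero_apply, kalmanEq_zero, inl_zero, inr_zero, add_zero] at this
  exact det_aeval_ne_zero (map_fst_dualMatrix _ B) (resolventForm_dualMatrix_map_fst f _ B u) ht
    hft huniq hne this

lemma eval_derivative_resolventForm_ne_zero (hf : f.IsHomogeneous d) (hd : d ≠ 0)
    (hK : Module.finrank ℂ (kalmanKer d f A) ≤ 1) (ht : (toMat A).charpoly.eval t = 0)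
    (ht' : (toMat A).charpoly.derivative.eval t = 0)
    (hu : (scalar (Fin n) t - toMat A).adjugate *ᵥ u ≠ 0)
    (hft : (resolventForm f (toMat A) u).eval t = 0) :
    (resolventForm f (toMat A) u).derivative.eval t ≠ 0 := by
  set v := (scalar (Fin n) t - toMat A).adjugate *ᵥ u
  have hv : toMat A *ᵥ v = t • v := mulVec_adjugate_mulVec ht u
  have charpoly_eval : (dualMatrix (toMat A) 0).charpoly.eval (inl t + inr 1) = 0 := by
    rw [dualMatrix_zero, charpoly_map, eval_map_inlHom, ht, ht', zero_mul, inl_zero, inr_zero,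
      add_zero]
  obtain ⟨w, hw, hCw⟩ := exists_snd_eval_resolventForm_eq_differential f charpoly_eval u
  rw [resolventForm_dualMatrix_zero, eval_map_inlHom, hft, snd_add, snd_inl, snd_inr, zero_add,
    mul_one] at hw
  have hAw : toMat A *ᵥ w = t • w + (1 : ℂ) • v := by
    rw [sub_zero, sub_mulVec, scalar_mulVec, scalar_mulVec] at hCw
    linear_combination (exp := 1) -hCw
  rw [hw]
  refine differential_ne_zero_of_mulVec_mem_span hf hd hK hv
    (by rwa [eval_resolventForm] at hft) ((LinearIndependent.pair_iff' hu).2 ?_) hAw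
  rintro c rfl
  rw [mulVec_smul, hv, smul_comm, one_smul, left_eq_add] at hAw
  exact hu hAw

lemma snd_eval_resolventForm_commutator (hf : f.IsHomogeneous d) (hd : 2 ≤ d)
    (hK : Module.finrank ℂ (kalmanKer d f A) ≤ 1) (ht : (toMat A).charpoly.eval t = 0)
    (hu : (scalar (Fin n) t - toMat A).adjugate *ᵥ u ≠ 0)
    (hft : (resolventForm f (toMat A) u).eval t = 0) (P : Matrix (Fin n) (Fin n) ℂ) :
    ((resolventForm f (dualMatrix (toMat A) (P * toMat A - toMat A * P)) (inl ∘ u)).eval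
        (inl t)).snd =
      differential f ((scalar (Fin n) t - toMat A).adjugate *ᵥ u)
        (P *ᵥ ((scalar (Fin n) t - toMat A).adjugate *ᵥ u)) := by
  have charpoly_eval :
      (dualMatrix (toMat A) (P * toMat A - toMat A * P)).charpoly.eval (inl t + inr 0) = 0 := by
    rw [inr_zero, add_zero, eval_charpoly_dualMatrix_commutator, ht, inl_zero]
  obtain ⟨w, hw, hCw⟩ := exists_snd_eval_resolventForm_eq_differential f charpoly_eval u
  rw [eval_resolventForm, aeval_eq_eval] at hft
  have hv := mulVec_adjugate_mulVec ht u
  set v := (scalar (Fin n) t - toMat A).adjugate *ᵥ u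
  have hPv : toMat A *ᵥ (w - P *ᵥ v) = t • (w - P *ᵥ v) := by
    rw [map_zero, zero_sub, neg_mulVec, sub_mulVec, sub_mulVec, ← mulVec_mulVec, hv, mulVec_smul,
      ← mulVec_mulVec, scalar_mulVec] at hCw
    rw [mulVec_sub, smul_sub]
    linear_combination (exp := 1) -hCw
  obtain ⟨c, hc⟩ : ∃ c : ℂ, c • v = w - P *ᵥ v := by
    by_contra! h
    exact not_linearIndependent_of_eigenspace hf hd hK hv hPv ((LinearIndependent.pair_iff' hu).2 h)
  rw [inr_zero, add_zero] at hw
  rw [hw, ← sub_eq_zero, ← map_sub, ← hc, map_smul, differential_self_of_isHomogeneous hf, hft,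
    mul_zero, smul_zero]

lemma eigenvalue_unique {v w : Fin n → ℂ} {s : ℂ} (hf : f.IsHomogeneous d) (hd : d ≠ 0)
    (hK : Module.finrank ℂ (kalmanKer d f A) ≤ 1) (hv0 : v ≠ 0) (hv : toMat A *ᵥ v = s • v)
    (hfv : eval v f = 0) (hw0 : w ≠ 0) (hw : toMat A *ᵥ w = t • w) (hfw : eval w f = 0) :
    s = t := by
  obtain ⟨c, rfl⟩ : ∃ c : ℂ, c • v = w := by
    by_contra! h
    exact not_linearIndependent_of_eigenvectors hf hd hK hv hfv hw hfw
      ((LinearIndependent.pair_iff' hv0).2 h)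
  rw [mulVec_smul, hv, smul_comm] at hw
  exact smul_left_injective ℂ hw0 hw

lemma exists_dualMatrix_velocity_ne (hf : f.IsHomogeneous d) (hd : 2 ≤ d) (hf0 : f ≠ 0)
    (hK : Module.finrank ℂ (kalmanKer d f A) ≤ 1) (ht : (toMat A).charpoly.eval t = 0)
    (hu : (scalar (Fin n) t - toMat A).adjugate *ᵥ u ≠ 0)
    (hft : (resolventForm f (toMat A) u).eval t = 0) :
    ∃ B, ((dualMatrix (toMat A) B).charpoly.eval (inl t)).snd *
        (resolventForm f (toMat A) u).derivative.eval t ≠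
      ((resolventForm f (dualMatrix (toMat A) B) (inl ∘ u)).eval (inl t)).snd *
        (toMat A).charpoly.derivative.eval t := by
  by_cases ht' : (toMat A).charpoly.derivative.eval t = 0
  · obtain ⟨i, j, hij⟩ : ∃ i j, (scalar (Fin n) t - toMat A).adjugate i j ≠ 0 := by
      by_contra! h
      exact hu (by rw [show (scalar (Fin n) t - toMat A).adjugate = 0 from ext h, zero_mulVec])
    refine ⟨-Matrix.single j i 1, ?_⟩
    have := eval_charpoly_dualMatrix (toMat A) (-Matrix.single j i 1) t 0
    rw [map_zero, zero_sub, neg_neg, inr_zero, add_zero, det_dualMatrix_single] at this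
    rw [this, ht', mul_zero, snd_add, snd_inl, snd_inr, zero_add]
    exact mul_ne_zero hij (eval_derivative_resolventForm_ne_zero hf (by lia) hK ht ht' hu hft)
  · obtain ⟨P, hP⟩ : ∃ P : Matrix (Fin n) (Fin n) ℂ,
        differential f ((scalar (Fin n) t - toMat A).adjugate *ᵥ u)
          (P *ᵥ ((scalar (Fin n) t - toMat A).adjugate *ᵥ u)) ≠ 0 := by
      obtain ⟨w, hw⟩ := DFunLike.ne_iff.1 (differential_ne_zero_of_eigenvector hf (by lia) hK hf0
        (mulVec_adjugate_mulVec ht u) hu (by rwa [eval_resolventForm] at hft))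
      obtain ⟨P, rfl⟩ := exists_mulVec_eq hu w
      exact ⟨P, hw⟩
    refine ⟨P * toMat A - toMat A * P, ?_⟩
    rw [eval_charpoly_dualMatrix_commutator, snd_inl, zero_mul,
      snd_eval_resolventForm_commutator hf hd hK ht hu hft]
    exact (mul_ne_zero hP ht').symm

lemma differential_kalmanEqPoly_ne_zero (hf : f.IsHomogeneous d) (hd : 2 ≤ d)
    (hf0 : f ≠ 0) (hK : Module.finrank ℂ (kalmanKer d f A) ≤ 1)
    (hu : ∀ s, (toMat A).charpoly.eval s = 0 → (scalar (Fin n) s - toMat A).adjugate *ᵥ u ≠ 0)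
    (hfA : kalmanEq f (toMat A) u = 0) : differential (kalmanEqPoly f u) A ≠ 0 := by
  obtain ⟨t, ht, hft⟩ := det_aeval_eq_zero_iff.1 hfA
  obtain ⟨B, hB⟩ := exists_dualMatrix_velocity_ne hf hd hf0 hK ht (hu t ht) hft
  refine differential_kalmanEqPoly_ne_zero_of_velocity_ne ht hft (fun s hs hfs => ?_) hB
  rw [eval_resolventForm] at hfs hft
  exact eigenvalue_unique hf (by lia) hK (hu s hs) (mulVec_adjugate_mulVec hs u) hfs (hu t ht)
    (mulVec_adjugate_mulVec ht u) hft

lemma smoothAt_zClosure_kalmanCone_of_two_le (hf : f.IsHomogeneous d) (hd : 2 ≤ d) (hf0 : f ≠ 0)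
    (hK : Module.finrank ℂ (kalmanKer d f A) ≤ 1)
    (hA : A ∈ zClosure (kalmanCone {x | eval x f = 0})) :
    smoothAt (zClosure (kalmanCone {x | eval x f = 0})) A := by
  have adjugate_scalar_sub_ne_zero (t : ℂ) (ht : (toMat A).charpoly.eval t = 0) :
      (scalar (Fin n) t - toMat A).adjugate ≠ 0 :=
    adjugate_ne_zero (by rwa [← eval_charpoly]) fun v w hv hw =>
      not_linearIndependent_of_eigenspace hf hd hK (scalar_sub_mulVec_eq_zero.1 hv)
        (scalar_sub_mulVec_eq_zero.1 hw)
  obtain ⟨u, b, hub⟩ := exists_kalmanEq_linForm_ne_zero adjugate_scalar_sub_ne_zero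
  have adjugate_mulVec_ne_zero (t : ℂ) (ht : (toMat A).charpoly.eval t = 0) :
      (scalar (Fin n) t - toMat A).adjugate *ᵥ u ≠ 0 := fun h =>
    hub (kalmanEq_eq_zero_iff.2 ⟨t, ht, by rw [h, eval_linForm, dotProduct_zero]⟩)
  have vanish (B : MatSpace n) (hB : B ∈ kalmanCone {x | eval x f = 0}) :
      eval B (kalmanEqPoly f u) = 0 := by
    obtain ⟨v, hfv, hv0, t, hv⟩ := hB
    rw [eval_kalmanEqPoly, kalmanEq_eq_zero hf hv0 hv hfv]
  have vanish_A : eval A (kalmanEqPoly f u) = 0 := by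
    rw [zClosure_eq_vanishSet] at hA
    exact hA _ vanish
  refine smoothAt_zClosure (D := kalmanEqPoly (linForm b) u) vanish (fun x hx hDx => ?_) hA
    (by rwa [eval_kalmanEqPoly])
    (differential_kalmanEqPoly_ne_zero hf hd hf0 hK adjugate_mulVec_ne_zero
      (by rwa [eval_kalmanEqPoly] at vanish_A))
  rw [eval_kalmanEqPoly] at hx hDx
  obtain ⟨v, hv0, hv, hfv⟩ := exists_isEigenvector_of_kalmanEq_eq_zero hx hDx
  exact ⟨v, hfv, hv0, hv⟩

end Gradient

/-! ## Degree one -/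

section Unobservable

open Matrix Polynomial

variable {R m : Type*} [CommRing R] [Fintype m] [DecidableEq m]

/-- The vectors `v` with `l M^i v = 0` for all `i`, i.e. the largest `M`-invariant subspace on which
the linear form `l` vanishes. -/
def unobservableSubspace (l : m → R) (M : Matrix m m R) : Submodule R (m → R) where
  carrier := {v | ∀ i : ℕ, l ⬝ᵥ M ^ i *ᵥ v = 0}
  add_mem' hv hw i := by rw [mulVec_add, dotProduct_add, hv i, hw i, add_zero]
  zero_mem' i := by rw [mulVec_zero, dotProduct_zero]
  smul_mem' c v hv i := by rw [mulVec_smul, dotProduct_smul, hv i, smul_zero]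

lemma mulVec_mem_unobservableSubspace {l : m → R} {M : Matrix m m R} {v : m → R}
    (hv : v ∈ unobservableSubspace l M) : M *ᵥ v ∈ unobservableSubspace l M := fun i => by
  rw [mulVec_mulVec, ← pow_succ]
  exact hv (i + 1)

lemma dotProduct_aeval_mulVec_eq_zero {l v : m → R} {M : Matrix m m R} {k : ℕ} {p : R[X]}
    (hp : p.degree < k) (hv : ∀ i < k, l ⬝ᵥ M ^ i *ᵥ v = 0) : l ⬝ᵥ aeval M p *ᵥ v = 0 := by
  rw [aeval_def, eval₂_eq_sum, Polynomial.sum, sum_mulVec, dotProduct_sum]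
  refine Finset.sum_eq_zero fun i hi => ?_
  have hik : i < k := (WithBot.coe_lt_coe.1 ((le_degree_of_mem_supp i hi).trans_lt hp))
  rw [← Algebra.smul_def, smul_mulVec, dotProduct_smul, hv i hik, smul_zero]

variable {K : Type*} [Field K] {l : m → K} {M : Matrix m m K}

lemma mem_unobservableSubspace_of_vecMul_aeval_eq_zero {q : K[X]} {v : m → K} (hq : q ≠ 0)
    (hlq : l ᵥ* aeval M q = 0) (hv : ∀ i < q.natDegree, l ⬝ᵥ M ^ i *ᵥ v = 0) :
    v ∈ unobservableSubspace l M := fun i => by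
  have degree_mod_lt : (X ^ i % q : K[X]).degree < (q.natDegree : WithBot ℕ) :=
    (EuclideanDomain.mod_lt _ hq).trans_eq (degree_eq_natDegree hq)
  rw [← aeval_X (R := K) M, ← map_pow, ← EuclideanDomain.div_add_mod (X ^ i) q, map_add, add_mulVec,
    dotProduct_add, map_mul, ← mulVec_mulVec, dotProduct_mulVec, hlq, zero_dotProduct, zero_add]
  exact dotProduct_aeval_mulVec_eq_zero degree_mod_lt hv

lemma card_le_natDegree_add_finrank_unobservableSubspace {q : K[X]} (hq : q ≠ 0)
    (hlq : l ᵥ* aeval M q = 0) :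
    Fintype.card m ≤ q.natDegree + Module.finrank K (unobservableSubspace l M) := by
  let T := (of fun i : Fin q.natDegree => l ᵥ* M ^ (i : ℕ)).mulVecLin
  have ker_le : LinearMap.ker T ≤ unobservableSubspace l M := fun v hv =>
    mem_unobservableSubspace_of_vecMul_aeval_eq_zero hq hlq fun i hi =>
      (dotProduct_mulVec _ _ _).trans (congrFun (LinearMap.mem_ker.1 hv) ⟨i, hi⟩)
  calc Fintype.card m
      = Module.finrank K (LinearMap.range T) + Module.finrank K (LinearMap.ker T) := by
        rw [T.finrank_range_add_finrank_ker, Module.finrank_fintype_fun_eq_card]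
    _ ≤ _ := Nat.add_le_add
        ((Submodule.finrank_le _).trans_eq (Module.finrank_fin_fun K))
        (Submodule.finrank_mono ker_le)

lemma linearIndependent_vecMul_pow {k : ℕ}
    (hk : k + Module.finrank K (unobservableSubspace l M) ≤ Fintype.card m) :
    LinearIndependent K fun i : Fin k => l ᵥ* M ^ (i : ℕ) := by
  classical
  refine Fintype.linearIndependent_iff.2 fun g hg => ?_
  suffices ofFn k g = 0 from congrFun (injective_ofFn k (this.trans (ofFn_zero k).symm))
  by_contra hq
  have natDegree_lt : (ofFn k g).natDegree < k :=
    (natDegree_lt_iff_degree_lt hq).2 (ofFn_degree_lt g)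
  have hlq : l ᵥ* aeval M (ofFn k g) = 0 := by
    rw [ofFn_eq_sum_monomial, map_sum, vecMul_sum, ← hg]
    exact Finset.sum_congr rfl fun i _ => by
      rw [aeval_monomial, ← Algebra.smul_def, vecMul_smul]
  have := card_le_natDegree_add_finrank_unobservableSubspace hq hlq
  omega

lemma exists_eigenvector_of_unobservableSubspace_ne_bot [IsAlgClosed K]
    (h : unobservableSubspace l M ≠ ⊥) : ∃ v ≠ 0, (∃ t : K, M *ᵥ v = t • v) ∧ l ⬝ᵥ v = 0 := by
  have := Submodule.nontrivial_iff_ne_bot.2 h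
  obtain ⟨t, ht⟩ := Module.End.exists_eigenvalue
    (M.mulVecLin.restrict fun _ => mulVec_mem_unobservableSubspace (l := l))
  obtain ⟨v, hv⟩ := ht.exists_hasEigenvector
  refine ⟨v, fun h0 => hv.2 (Subtype.ext h0), ⟨t, congrArg Subtype.val hv.apply_eq_smul⟩, ?_⟩
  simpa using v.2 0

end Unobservable

section Krylov

open MvPolynomial Matrix TrivSqZeroExt

variable {R S : Type*} [CommRing R] [CommRing S] {n : ℕ}

/-- The Krylov matrix of `l` and `M`, with rows `l, lM, …, lM^{n-1}`. -/
def krylovMatrix (l : Fin n → R) (M : Matrix (Fin n) (Fin n) R) : Matrix (Fin n) (Fin n) R :=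
  of fun i => l ᵥ* M ^ (i : ℕ)

lemma krylovMatrix_map (φ : R →+* S) (l : Fin n → R) (M : Matrix (Fin n) (Fin n) R) :
    krylovMatrix (φ ∘ l) (M.map φ) = (krylovMatrix l M).map φ := by
  ext i j
  rw [krylovMatrix, of_apply, ← Matrix.map_pow, ← RingHom.map_vecMul]
  rfl

lemma krylovMatrix_mulVec (l v : Fin n → R) (M : Matrix (Fin n) (Fin n) R) (i : Fin n) :
    (krylovMatrix l M *ᵥ v) i = l ⬝ᵥ M ^ (i : ℕ) *ᵥ v := by
  rw [dotProduct_mulVec]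
  rfl

lemma vecMul_dualMatrix {κ ι : Type*} [Fintype κ] (l : κ → R) (M B : Matrix κ ι R) :
    (inl ∘ l : κ → DualNumber R) ᵥ* dualMatrix M B = dualVec (l ᵥ* M) (l ᵥ* B) := by
  ext i <;> simp [vecMul, dotProduct, dualMatrix, dualVec, fst_sum, snd_sum]

lemma vecMul_dualMatrix_vecMulVec_pow {l a b : Fin n → R} {M : Matrix (Fin n) (Fin n) R} {k : ℕ}
    (ha : ∀ i < k, (l ᵥ* M ^ i) ⬝ᵥ a = 0) :
    (inl ∘ l : Fin n → DualNumber R) ᵥ* dualMatrix M (vecMulVec a b) ^ k = inl ∘ (l ᵥ* M ^ k) := by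
  induction k with
  | zero => simp
  | succ k ih =>
    rw [pow_succ, ← vecMul_vecMul, ih fun i hi => ha i (by lia), vecMul_dualMatrix,
      vecMul_vecMulVec, ha k (by lia), vecMul_vecMul, ← pow_succ]
    ext i <;> simp [dualVec]

/-- The perturbation `ε a bᵀ` changes only the last row, because `a` is orthogonal to all but the
last two rows of the Krylov matrix. -/
lemma krylovMatrix_dualMatrix_vecMulVec {l a b : Fin (n + 2) → R}
    {M : Matrix (Fin (n + 2)) (Fin (n + 2)) R} (ha : ∀ i < n, (l ᵥ* M ^ i) ⬝ᵥ a = 0)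
    (ha' : (l ᵥ* M ^ n) ⬝ᵥ a = 1) :
    krylovMatrix (inl ∘ l) (dualMatrix M (vecMulVec a b)) =
      dualMatrix (krylovMatrix l M) ((0 : Matrix _ _ R).updateRow (Fin.last (n + 1)) b) := by
  have row_castSucc (i : Fin (n + 1)) :
      (inl ∘ l : _ → DualNumber R) ᵥ* dualMatrix M (vecMulVec a b) ^ (i : ℕ) =
        inl ∘ (l ᵥ* M ^ (i : ℕ)) :=
    vecMul_dualMatrix_vecMulVec_pow fun j hj => ha j (by lia)
  have row_last : (inl ∘ l : _ → DualNumber R) ᵥ* dualMatrix M (vecMulVec a b) ^ (n + 1) =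
      dualVec (l ᵥ* M ^ (n + 1)) b := by
    rw [pow_succ, ← vecMul_vecMul, vecMul_dualMatrix_vecMulVec_pow ha, vecMul_dualMatrix,
      vecMul_vecMulVec, ha', one_smul, vecMul_vecMul, ← pow_succ]
  ext1 i j
  refine Fin.lastCases ?_ (fun i => ?_) i
  · refine (congrFun row_last j).trans ?_
    simp [dualMatrix, dualVec, krylovMatrix]
  · refine (congrFun (row_castSucc i) j).trans ?_
    simp [dualMatrix, krylovMatrix]

lemma exists_det_updateRow_ne_zero {K : Type*} [Field K] {M : Matrix (Fin (n + 1)) (Fin (n + 1)) K}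
    (hM : LinearIndependent K fun i : Fin n => M i.castSucc) :
    ∃ b, (M.updateRow (Fin.last n) b).det ≠ 0 := by
  obtain ⟨b, hb⟩ := exists_linearIndependent_snoc_of_lt_finrank hM (by simp)
  refine ⟨b, ?_⟩
  have row_eq : (M.updateRow (Fin.last n) b).row = Fin.snoc (fun i => M i.castSucc) b := by
    ext1 i
    refine Fin.lastCases ?_ (fun i => ?_) i
    · simp [row]
    · simp [row]
  rw [← isUnit_iff_ne_zero, ← isUnit_iff_isUnit_det, ← linearIndependent_rows_iff_isUnit, row_eq]
  exact hb

lemma exists_snd_det_krylovMatrix_dualMatrix_ne_zero {K : Type*} [Field K]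
    {l : Fin (n + 2) → K} {M : Matrix (Fin (n + 2)) (Fin (n + 2)) K}
    (h : Module.finrank K (unobservableSubspace l M) ≤ 1) :
    ∃ B, (krylovMatrix (inl ∘ l) (dualMatrix M B)).det.snd ≠ 0 := by
  have hrows : LinearIndependent K fun i : Fin (n + 1) => l ᵥ* M ^ (i : ℕ) :=
    linearIndependent_vecMul_pow (by rw [Fintype.card_fin]; lia)
  obtain ⟨a, ha⟩ := exists_dotProduct_eq hrows (Pi.single (Fin.last n) 1)
  simp only [dotProduct_comm a] at ha
  obtain ⟨b, hb⟩ := exists_det_updateRow_ne_zero (M := krylovMatrix l M) hrows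
  have dotProduct_eq_zero : ∀ i < n, (l ᵥ* M ^ i) ⬝ᵥ a = 0 := fun i hi =>
    (ha ⟨i, by lia⟩).trans (Pi.single_eq_of_ne (Fin.ne_of_lt hi) 1)
  have dotProduct_eq_one : (l ᵥ* M ^ n) ⬝ᵥ a = 1 :=
    (ha (Fin.last n)).trans (Pi.single_eq_same _ _)
  refine ⟨vecMulVec a b, ?_⟩
  rw [krylovMatrix_dualMatrix_vecMulVec dotProduct_eq_zero dotProduct_eq_one,
    det_dualMatrix_updateRow]
  simpa using hb

lemma det_krylovMatrix_eq_zero_iff {K : Type*} [Field K] [IsAlgClosed K] {l : Fin n → K}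
    {M : Matrix (Fin n) (Fin n) K} :
    (krylovMatrix l M).det = 0 ↔ ∃ v ≠ 0, (∃ t : K, M *ᵥ v = t • v) ∧ l ⬝ᵥ v = 0 := by
  constructor
  · refine fun h => exists_eigenvector_of_unobservableSubspace_ne_bot fun hbot => ?_
    have hrows : LinearIndependent K (krylovMatrix l M).row :=
      linearIndependent_vecMul_pow (by rw [hbot, finrank_bot, Fintype.card_fin, add_zero])
    rw [linearIndependent_rows_iff_isUnit, isUnit_iff_isUnit_det, h] at hrows
    exact not_isUnit_zero hrows
  · rintro ⟨v, hv0, ⟨t, hv⟩, hlv⟩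
    refine exists_mulVec_eq_zero_iff.1 ⟨v, hv0, funext fun i => ?_⟩
    rw [krylovMatrix_mulVec, pow_mulVec_of_mulVec_eq_smul hv, dotProduct_smul, hlv, smul_zero]
    rfl

/-- The determinant of the Krylov matrix of `l`, as a polynomial function on the space of
matrices. -/
def krylovDet (l : Fin n → ℂ) : MvPolynomial (Fin n × Fin n) ℂ :=
  (krylovMatrix (C ∘ l) (genMat n)).det

lemma aeval_krylovDet {S : Type*} [CommRing S] [Algebra ℂ S] (l : Fin n → ℂ)
    (A : Fin n × Fin n → S) :
    aeval A (krylovDet l) = (krylovMatrix (algebraMap ℂ S ∘ l) (of fun i j => A (i, j))).det := by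
  change (aeval A : MvPolynomial (Fin n × Fin n) ℂ →ₐ[ℂ] S).toRingHom _ = _
  rw [krylovDet, RingHom.map_det, RingHom.mapMatrix_apply, ← krylovMatrix_map]
  congr! 2
  · ext i
    simp
  · ext i j
    simp [genMat]

lemma eval_krylovDet (l : Fin n → ℂ) (A : MatSpace n) :
    eval A (krylovDet l) = (krylovMatrix l (toMat A)).det :=
  aeval_krylovDet l A

lemma differential_krylovDet_ne_zero (hn : 2 ≤ n) {l : Fin n → ℂ} {A : MatSpace n}
    (h : Module.finrank ℂ (unobservableSubspace l (toMat A)) ≤ 1) :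
    differential (krylovDet l) A ≠ 0 := by
  obtain ⟨n, rfl⟩ := Nat.exists_eq_add_of_le' hn
  obtain ⟨B, hB⟩ := exists_snd_det_krylovMatrix_dualMatrix_ne_zero h
  let B' : MatSpace (n + 2) := fun ij => B ij.1 ij.2
  refine fun h0 => hB ?_
  rw [← LinearMap.zero_apply (σ₁₂ := RingHom.id ℂ) B', ← h0, ← snd_aeval_dualVec, aeval_krylovDet]
  rfl

end Krylov

section DegreeOne

open MvPolynomial Matrix

lemma exists_eq_linForm {R ι : Type*} [CommRing R] [Fintype ι] {f : MvPolynomial ι R}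
    (hf : f.IsHomogeneous 1) : ∃ l, f = linForm l := by
  rw [← mem_homogeneousSubmodule, homogeneousSubmodule_one_eq_span_X,
    Submodule.mem_span_range_iff_exists_fun] at hf
  obtain ⟨l, rfl⟩ := hf
  exact ⟨l, by simp [linForm, smul_eq_C_mul]⟩

variable {n : ℕ} {l : Fin n → ℂ} {A : MatSpace n}

lemma finrank_unobservableSubspace_le_one
    (hK : Module.finrank ℂ (kalmanKer 1 (linForm l) A) ≤ 1) :
    Module.finrank ℂ (unobservableSubspace l (toMat A)) ≤ 1 := by
  by_contra! h
  have := Module.nontrivial_of_finrank_pos (zero_lt_one.trans h)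
  obtain ⟨v, hv⟩ := exists_ne (0 : unobservableSubspace l (toMat A))
  obtain ⟨w, hvw⟩ := exists_linearIndependent_pair_of_one_lt_finrank h hv
  have eval_eq_zero (x : unobservableSubspace l (toMat A)) (i : ℕ) :
      eval (toMat A ^ i *ᵥ x) (linForm l) = 0 := (eval_linForm _ _).trans (x.2 i)
  refine not_linearIndependent_of_forall_eval_eq_zero (isHomogeneous_linForm l) one_ne_zero hK
    (eval_eq_zero v) (eval_eq_zero w) ?_
  exact LinearIndependent.pair_iff.2 fun a b hab =>
    LinearIndependent.pair_iff.1 hvw a b (Subtype.ext hab)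

lemma smoothAt_zClosure_kalmanCone_linForm (hl : linForm l ≠ 0)
    (hK : Module.finrank ℂ (kalmanKer 1 (linForm l) A) ≤ 1)
    (hA : A ∈ zClosure (kalmanCone {x | eval x (linForm l) = 0})) :
    smoothAt (zClosure (kalmanCone {x | eval x (linForm l) = 0})) A := by
  have eval_krylovDet_eq_zero_iff (B : MatSpace n) :
      eval B (krylovDet l) = 0 ↔ B ∈ kalmanCone {x | eval x (linForm l) = 0} := by
    rw [eval_krylovDet, det_krylovMatrix_eq_zero_iff]
    simp only [← eval_linForm]
    exact ⟨fun ⟨v, hv0, ⟨t, hv⟩, hlv⟩ => ⟨v, hlv, hv0, t, hv⟩,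
      fun ⟨v, hlv, hv0, t, hv⟩ => ⟨v, hv0, ⟨t, hv⟩, hlv⟩⟩
  have hn : 2 ≤ n := by
    rw [zClosure_eq_vanishSet] at hA
    obtain ⟨v, hlv, hv0, -⟩ := (eval_krylovDet_eq_zero_iff A).1 <|
      hA _ fun B hB => (eval_krylovDet_eq_zero_iff B).2 hB
    obtain ⟨w, hvw⟩ :=
      exists_linearIndependent_of_eval_eq_zero (isHomogeneous_linForm l) hl hv0 hlv
    simpa using hvw.fintype_card_le_finrank
  refine smoothAt_zClosure (D := 1) (fun B hB => (eval_krylovDet_eq_zero_iff B).2 hB)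
    (fun B hB _ => (eval_krylovDet_eq_zero_iff B).1 hB) hA (by simp)
    (differential_krylovDet_ne_zero hn (finrank_unobservableSubspace_le_one hK))

end DegreeOne

/-- For a hypersurface `X = V(f) ⊆ ℙ^{n-1}` of degree `d`, the reduced
singular locus of `𝒦(X)` is contained in the variety cut out by the `(N-1) × (N-1)` minors
of the square Kalman matrix `K_d(f)`. -/
theorem sing_kalman_subset_subminors (n d : ℕ) (hn : 0 < n) (hd : 0 < d)
    (f : MvPolynomial (Fin n) ℂ) (hf : f ≠ 0) (hhom : f.IsHomogeneous d)
    (X : Set (Fin n → ℂ)) (hX : X = {x | MvPolynomial.eval x f = 0}) :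
    singKalmanCone X ⊆
      {A : MatSpace n | ∀ e₁ e₂ : Fin (Fintype.card (MonIdx n d) - 1) → MonIdx n d,
        Function.Injective e₁ → Function.Injective e₂ →
        MvPolynomial.eval A
          (Matrix.det (Matrix.of fun i j => kalmanSq d (coeffVec d f) (e₁ i) (e₂ j))) = 0} := by
  subst hX
  intro A hA e₁ e₂ _ _
  rw [singKalmanCone, zClosure_eq_vanishSet] at hA
  refine hA _ fun B ⟨hB, _, not_smooth⟩ => ?_
  by_contra minor_ne_zero
  refine not_smooth ?_
  have hK := finrank_kalmanKer_le_one (by simp) minor_ne_zero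
  obtain rfl | two_le : d = 1 ∨ 2 ≤ d := by lia
  · obtain ⟨l, rfl⟩ := exists_eq_linForm hhom
    exact smoothAt_zClosure_kalmanCone_linForm hf hK hB
  · exact smoothAt_zClosure_kalmanCone_of_two_le hhom two_le hf hK hB

end
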